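/- Let b > 0 and λ > 0. Then the density of states of the constant-field Landau Hamiltonian on ℝ² satisfies the Colin de Verdière formula: lim_{R→∞} N(λ; q_b, (-R/2, R/2)²) / R² = (b/2π) · #{ n ∈ ℕ : (2n+1)b < λ }. -/

import Mathlib

open MeasureTheory Real Filter

noncomputable section

/-- The upper half-plane ℍ as a subset of ℝ². -/
def UHP : Set (ℝ × ℝ) := {p : ℝ × ℝ | 0 < p.2}

/-- The hyperbolic measure `dv = y⁻² dx dy` on ℍ. -/
def volH : Measure (ℝ × ℝ) :=
  (volume.restrict UHP).withDensity fun p => ENNReal.ofReal ((p.2 ^ 2)⁻¹)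

/-- x-derivative of a complex function on ℝ². -/
def dX (f : ℝ × ℝ → ℂ) (p : ℝ × ℝ) : ℂ := fderiv ℝ f p (1, 0)

/-- y-derivative of a complex function on ℝ². -/
def dY (f : ℝ × ℝ → ℂ) (p : ℝ × ℝ) : ℂ := fderiv ℝ f p (0, 1)

/-- x-derivative of a real function on ℝ². -/
def dXr (f : ℝ × ℝ → ℝ) (p : ℝ × ℝ) : ℝ := fderiv ℝ f p (1, 0)

/-- y-derivative of a real function on ℝ². -/
def dYr (f : ℝ × ℝ → ℝ) (p : ℝ × ℝ) : ℝ := fderiv ℝ f p (0, 1)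

/-- The magnetic field `b̃ = y² (∂ₓA₂ - ∂_yA₁)`. -/
def fieldB (A₁ A₂ : ℝ × ℝ → ℝ) (p : ℝ × ℝ) : ℝ := p.2 ^ 2 * (dXr A₂ p - dYr A₁ p)

/-- The magnetic intensity `b = |b̃|`. -/
def intenB (A₁ A₂ : ℝ × ℝ → ℝ) (p : ℝ × ℝ) : ℝ := |fieldB A₁ A₂ p|

/-- Smooth compactly supported test functions with support inside a set `Ω`. -/
def IsTestOn (Ω : Set (ℝ × ℝ)) (f : ℝ × ℝ → ℂ) : Prop :=
  ContDiff ℝ (⊤ : ℕ∞) f ∧ HasCompactSupport f ∧ tsupport f ⊆ Ω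

/-- The quadratic form of the magnetic Laplacian on ℍ. -/
def qA (A₁ A₂ : ℝ × ℝ → ℝ) (f : ℝ × ℝ → ℂ) : ℝ :=
  ∫ p, p.2 ^ 2 * (‖-Complex.I * dX f p - (A₁ p : ℂ) * f p‖ ^ 2 +
    ‖-Complex.I * dY f p - (A₂ p : ℂ) * f p‖ ^ 2) ∂volH

/-- hyperbolic distance from `(x,y)` to `(0,1)`. -/
def hDist (p : ℝ × ℝ) : ℝ :=
  2 * Real.arsinh (Real.sqrt (p.1 ^ 2 + (p.2 - 1) ^ 2) / (2 * Real.sqrt p.2))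

/-- (H1) : the magnetic intensity tends to +∞ at infinity. -/
def H1 (A₁ A₂ : ℝ × ℝ → ℝ) : Prop :=
  ∀ M : ℝ, ∃ R : ℝ, ∀ p ∈ UHP, R ≤ hDist p → M ≤ intenB A₁ A₂ p

/-- (H2) : control of the derivative of the magnetic field. -/
def H2 (C₀ : ℝ) (A₁ A₂ : ℝ × ℝ → ℝ) : Prop :=
  ∀ p ∈ UHP, p.2 * Real.sqrt ((dXr (fieldB A₁ A₂) p) ^ 2 + (dYr (fieldB A₁ A₂) p) ^ 2)
    ≤ C₀ * (intenB A₁ A₂ p + 1)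

/-- Counting function of a quadratic form `q` with form domain `dom` and squared
norm `nsq`, via Glazman's lemma. -/
def NN (q : (ℝ × ℝ → ℂ) → ℝ) (dom : Set (ℝ × ℝ → ℂ)) (nsq : (ℝ × ℝ → ℂ) → ℝ)
    (lam : ℝ) : ℕ :=
  sSup {n : ℕ | ∃ V : Submodule ℂ (ℝ × ℝ → ℂ), (V : Set (ℝ × ℝ → ℂ)) ⊆ dom ∧
    Module.finrank ℂ V = n ∧ ∀ u ∈ V, u ≠ 0 → q u < lam * nsq u}

/-- Heaviside function `[ρ]₊⁰`. -/
def heav (ρ : ℝ) : ℝ := if 0 < ρ then 1 else 0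


/-- The quadratic form of the Landau Hamiltonian with constant field `b` on ℝ². -/
def qb (b : ℝ) (u : ℝ × ℝ → ℂ) : ℝ :=
  ∫ p : ℝ × ℝ, (‖-Complex.I * dX u p - ((b * p.2 / 2 : ℝ) : ℂ) * u p‖ ^ 2 +
    ‖-Complex.I * dY u p + ((b * p.1 / 2 : ℝ) : ℂ) * u p‖ ^ 2)

/-- Dirichlet eigenvalue counting function of the Landau Hamiltonian on `Ω`. -/
def NNb (b lam : ℝ) (Ω : Set (ℝ × ℝ)) : ℕ :=
  NN (qb b) {u | IsTestOn Ω u} (fun u => ∫ p : ℝ × ℝ, ‖u p‖ ^ 2) lam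

/-- Number of Landau levels below `lam` : `#{n ∈ ℕ : (2n+1)b < lam}`. -/
def landauCount (b lam : ℝ) : ℕ := Nat.card {n : ℕ | (2 * (n : ℝ) + 1) * b < lam}

/-- The open rectangle `(-R₁/2, R₁/2) × (-R₂/2, R₂/2)`. -/
def rectR (R₁ R₂ : ℝ) : Set (ℝ × ℝ) :=
  Set.Ioo (-R₁ / 2) (R₁ / 2) ×ˢ Set.Ioo (-R₂ / 2) (R₂ / 2)


/-!
Multiplication by `exp (-i b x y / 2)` turns `q_b` into the Landau-gauge form
`∫ |∂ₓ v|² + |(-i ∂_y + b x) v|²`.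

For the upper bound, expand a test function on the square in a Fourier series of period `R` in `y`.
The mode with wave number `k = 2π m / R` is governed by a harmonic oscillator centred at `-k / b`.
If `|k| ≥ b R / 2 + √λ`, its potential is at least `λ` on the whole square. There are about
`b R² / 2π` other modes, and in each of them orthogonality to `K` polynomials times a Gaussian
forces the energy up to the level `(2 K + 1) b ≥ λ`, by induction along the ladder operators. So a
space of test functions with energy below `λ` has dimension at most `K` times the number of modes.

For the lower bound, take the lowest `K` oscillator eigenfunctions in each mode centred well inside
the square, and cut them off. The Gram matrix of the mass lost in the cutoff has trace much smaller
than its size, so on a subspace of almost full dimension the norm is almost unchanged, while the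
cutoff raises the energy only by `O(R⁻²)` up to a factor close to `1`.
-/

open scoped ContDiff InnerProductSpace

/-! ### Ladder operators -/

section Ladder

variable {E F G : Type*} [NormedAddCommGroup E] [NormedAddCommGroup F] [NormedAddCommGroup G]

section NormedSpace

variable [NormedSpace ℝ E] [NormedSpace ℝ F] [NormedSpace ℝ G]

/-- The lowering (annihilation) operator `d/dx + b x` of the harmonic oscillator
`-d²/dx² + b² x²`. -/
def lowering (b : ℝ) (f : ℝ → E) (x : ℝ) : E := deriv f x + (b * x) • f x

/-- The raising (creation) operator `-d/dx + b x` of the harmonic oscillator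
`-d²/dx² + b² x²`. -/
def raising (b : ℝ) (f : ℝ → E) (x : ℝ) : E := (b * x) • f x - deriv f x

theorem continuous_lowering (b : ℝ) {f : ℝ → E} (hf : ContDiff ℝ 1 f) :
    Continuous (lowering b f) := by
  have := hf.continuous
  have := hf.continuous_deriv le_rfl
  unfold lowering
  fun_prop

theorem integral_bilinear_raising (L : E →L[ℝ] F →L[ℝ] G) (b : ℝ) {w : ℝ → E} {g : ℝ → F}
    (hw : Differentiable ℝ w) (hg : Differentiable ℝ g)
    (hwg : Integrable fun x ↦ L (w x) (g x))
    (hraising : Integrable fun x ↦ L (raising b w x) (g x))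
    (hlowering : Integrable fun x ↦ L (w x) (lowering b g x)) :
    ∫ x, L (raising b w x) (g x) = ∫ x, L (w x) (lowering b g x) := by
  have hderiv (x : ℝ) : HasDerivAt (fun x ↦ L (w x) (g x))
      (L (w x) (lowering b g x) - L (raising b w x) (g x)) x := by
    refine (L.hasDerivAt_of_bilinear (fun _ ↦ (hw x).hasDerivAt)
      fun _ ↦ (hg x).hasDerivAt).congr_deriv ?_
    simp only [lowering, raising, map_add, map_sub, map_smul, sub_apply, smul_apply]
    abel
  have hzero := integral_eq_zero_of_hasDerivAt_of_integrable hderiv (hlowering.sub hraising) hwg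
  rw [integral_sub hlowering hraising] at hzero
  exact (sub_eq_zero.mp hzero).symm

theorem hasDerivAt_exp_mul_sq_div_two (c x : ℝ) :
    HasDerivAt (fun x ↦ exp (c * x ^ 2 / 2)) (c * x * exp (c * x ^ 2 / 2)) x := by
  refine ((((hasDerivAt_pow 2 x).const_mul c).div_const 2).exp).congr_deriv ?_
  push_cast
  ring

theorem intervalIntegral_eq_zero_of_integral_eq_zero {g : ℝ → E} {A x : ℝ}
    (hg : ∀ t, A ≤ |t| → g t = 0) (hint : ∫ t, g t = 0) (hx : A ≤ |x|) :
    ∫ t in (-A)..x, g t = 0 := by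
  rcases le_abs.mp hx with hle | hle
  · rw [intervalIntegral.integral_eq_integral_of_support_subset, hint]
    refine fun t ht ↦ ?_
    have := abs_lt.mp (not_le.mp fun h ↦ ht (hg t h))
    exact ⟨this.1, by linarith⟩
  · refine (intervalIntegral.integral_congr fun t ht ↦ hg t ?_).trans
      intervalIntegral.integral_zero
    rw [Set.uIcc_of_ge (by linarith)] at ht
    exact le_abs.mpr (.inr (by linarith [ht.2]))

-- Variation of constants; the vanishing moment makes the solution vanish to the right of `supp f`.
theorem exists_raising_eq [CompleteSpace E] (b : ℝ) {f : ℝ → E} (hf : Continuous f)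
    (hfc : HasCompactSupport f) (hmoment : ∫ x, exp (-b * x ^ 2 / 2) • f x = 0) :
    ∃ w : ℝ → E, ContDiff ℝ 1 w ∧ HasCompactSupport w ∧ raising b w = f := by
  set g : ℝ → E := fun x ↦ exp (-b * x ^ 2 / 2) • f x with hg
  have hgcont : Continuous g := by fun_prop
  obtain ⟨A, -, hgA⟩ := (hfc.smul_left (f := fun x ↦ exp (-b * x ^ 2 / 2))).exists_pos_le_norm
  set w : ℝ → E := fun x ↦ -(exp (b * x ^ 2 / 2) • ∫ t in (-A)..x, g t) with hw
  have hderiv (x : ℝ) : HasDerivAt w ((b * x) • w x - f x) x := by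
    refine ((hasDerivAt_exp_mul_sq_div_two b x).smul
      (intervalIntegral.integral_hasDerivAt_right (hgcont.intervalIntegrable _ _)
        (hgcont.stronglyMeasurableAtFilter _ _) hgcont.continuousAt)).neg.congr_deriv ?_
    have hexp : exp (b * x ^ 2 / 2) * exp (-b * x ^ 2 / 2) = 1 := by
      rw [← exp_add, ← exp_zero]; ring_nf
    rw [hg, hw, smul_smul, hexp, one_smul, smul_neg, smul_smul]
    abel
  have hwdiff : Differentiable ℝ w := fun x ↦ (hderiv x).differentiableAt
  have hwderiv : deriv w = fun x ↦ (b * x) • w x - f x := funext fun x ↦ (hderiv x).deriv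
  refine ⟨w, contDiff_one_iff_deriv.mpr ⟨hwdiff, ?_⟩, ?_, ?_⟩
  · have := hwdiff.continuous
    rw [hwderiv]
    fun_prop
  · refine .intro (isCompact_closedBall 0 A) fun x hx ↦ ?_
    have hAx : A ≤ |x| := (not_le.mp (mem_closedBall_zero_iff.not.mp hx)).le
    have hint : ∫ t in (-A)..x, g t = 0 :=
      intervalIntegral_eq_zero_of_integral_eq_zero hgA hmoment hAx
    simp only [hw, hint, smul_zero, neg_zero]
  · funext x
    simp only [raising, hwderiv, sub_sub_cancel]

end NormedSpace

theorem integrable_norm_sq_of_hasCompactSupport {α : Type*} [TopologicalSpace α] [R1Space α]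
    [MeasurableSpace α] [OpensMeasurableSpace α] {μ : Measure α} [IsFiniteMeasureOnCompacts μ]
    {f : α → E} (hf : Continuous f) (hfc : HasCompactSupport f) :
    Integrable (fun x ↦ ‖f x‖ ^ 2) μ :=
  (by fun_prop : Continuous fun x ↦ ‖f x‖ ^ 2).integrable_of_hasCompactSupport
    (hfc.comp_left (g := fun v ↦ ‖v‖ ^ 2) (by simp))

section InnerProductSpace

variable [InnerProductSpace ℝ E]

theorem inner_lowering_add_inner_raising (b : ℝ) (f g : ℝ → E) (x : ℝ) :
    ⟪lowering b f x, lowering b g x⟫_ℝ + ⟪raising b f x, raising b g x⟫_ℝ =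
      2 * (⟪deriv f x, deriv g x⟫_ℝ + ⟪(b * x) • f x, (b * x) • g x⟫_ℝ) := by
  simp only [lowering, raising, inner_add_left, inner_add_right, inner_sub_left, inner_sub_right]
  ring

variable {f : ℝ → E}

theorem integrable_norm_lowering_sq (hf : ContDiff ℝ 1 f) (hfc : HasCompactSupport f) (b : ℝ) :
    Integrable fun x ↦ ‖lowering b f x‖ ^ 2 :=
  integrable_norm_sq_of_hasCompactSupport (continuous_lowering b hf)
    (hfc.deriv.add hfc.smul_left)

theorem integrable_oscillator_energy (hf : ContDiff ℝ 1 f) (hfc : HasCompactSupport f) (b : ℝ) :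
    Integrable fun x ↦ ‖deriv f x‖ ^ 2 + ‖(b * x) • f x‖ ^ 2 := by
  have := hf.continuous
  exact (integrable_norm_sq_of_hasCompactSupport (hf.continuous_deriv le_rfl) hfc.deriv).add
    (integrable_norm_sq_of_hasCompactSupport (by fun_prop) hfc.smul_left)

theorem integrable_inner_deriv_mul_self (hf : ContDiff ℝ 1 f) (hfc : HasCompactSupport f) (b : ℝ) :
    Integrable fun x ↦ ⟪deriv f x, (b * x) • f x⟫_ℝ := by
  have := hf.continuous
  have := hf.continuous_deriv le_rfl
  exact (by fun_prop : Continuous _).integrable_of_hasCompactSupport <|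
    hfc.mono fun x hx hfx ↦ hx (by simp [hfx])

theorem integral_inner_deriv_mul_self (hf : ContDiff ℝ 1 f) (hfc : HasCompactSupport f) (b : ℝ) :
    2 * ∫ x, ⟪deriv f x, (b * x) • f x⟫_ℝ = -(b * ∫ x, ‖f x‖ ^ 2) := by
  have := hf.continuous
  have hderiv (x : ℝ) : HasDerivAt (fun x ↦ b * x * ‖f x‖ ^ 2)
      (2 * ⟪deriv f x, (b * x) • f x⟫_ℝ + b * ‖f x‖ ^ 2) x := by
    refine (((hasDerivAt_id x).const_mul b).mul
      (hf.differentiable one_ne_zero x).hasDerivAt.norm_sq).congr_deriv ?_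
    rw [id, inner_smul_right, real_inner_comm]
    ring
  have hsq := (integrable_norm_sq_of_hasCompactSupport (μ := volume) hf.continuous hfc).const_mul b
  have hinner := (integrable_inner_deriv_mul_self hf hfc b).const_mul 2
  have hxsq : Integrable fun x ↦ b * x * ‖f x‖ ^ 2 :=
    (by fun_prop : Continuous _).integrable_of_hasCompactSupport <|
      hfc.mono fun x hx hfx ↦ hx (by simp [hfx])
  have hzero := integral_eq_zero_of_hasDerivAt_of_integrable hderiv (hinner.add hsq) hxsq
  rw [integral_add hinner hsq, integral_const_mul, integral_const_mul] at hzero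
  linarith

theorem integral_norm_lowering_sq (hf : ContDiff ℝ 1 f) (hfc : HasCompactSupport f) (b : ℝ) :
    ∫ x, ‖lowering b f x‖ ^ 2 =
      (∫ x, (‖deriv f x‖ ^ 2 + ‖(b * x) • f x‖ ^ 2)) - b * ∫ x, ‖f x‖ ^ 2 := by
  rw [sub_eq_add_neg, ← integral_inner_deriv_mul_self hf hfc, ← integral_const_mul,
    ← integral_add (integrable_oscillator_energy hf hfc b)
      ((integrable_inner_deriv_mul_self hf hfc b).const_mul 2)]
  congr! 2 with x
  rw [lowering, norm_add_sq_real]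
  ring

theorem integral_norm_raising_sq (hf : ContDiff ℝ 1 f) (hfc : HasCompactSupport f) (b : ℝ) :
    ∫ x, ‖raising b f x‖ ^ 2 = (∫ x, ‖lowering b f x‖ ^ 2) + 2 * b * ∫ x, ‖f x‖ ^ 2 := by
  have hcross : -4 * ∫ x, ⟪deriv f x, (b * x) • f x⟫_ℝ = 2 * b * ∫ x, ‖f x‖ ^ 2 := by
    linarith [integral_inner_deriv_mul_self hf hfc b]
  rw [← hcross, ← integral_const_mul, ← integral_add (integrable_norm_lowering_sq hf hfc b)
    ((integrable_inner_deriv_mul_self hf hfc b).const_mul _)]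
  congr! 2 with x
  rw [raising, lowering, norm_sub_sq_real, norm_add_sq_real, real_inner_comm]
  ring

end InnerProductSpace

end Ladder

/-! ### Polynomials times a Gaussian -/

section PolyGaussian

open Polynomial

/-- The function `P(x) exp(-b x² / 2)`; the ladder operators act on such functions through `P`. -/
def polyGaussian (b : ℝ) (P : ℝ[X]) (x : ℝ) : ℝ := P.eval x * exp (-b * x ^ 2 / 2)

theorem polyGaussian_smul (b a : ℝ) (P : ℝ[X]) (x : ℝ) :
    polyGaussian b (a • P) x = a * polyGaussian b P x := by
  rw [polyGaussian, eval_smul, smul_eq_mul, mul_assoc, polyGaussian]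

theorem mul_polyGaussian (b a x : ℝ) (P : ℝ[X]) :
    a * x * polyGaussian b P x = polyGaussian b (C a * X * P) x := by
  simp only [polyGaussian, eval_mul, eval_C, eval_X, mul_assoc]

theorem contDiff_polyGaussian (b : ℝ) (P : ℝ[X]) : ContDiff ℝ ∞ (polyGaussian b P) := by
  have hP : ContDiff ℝ ∞ fun x ↦ P.eval x := by simpa using P.contDiff_aeval (𝕜 := ℝ) ∞
  unfold polyGaussian
  fun_prop

theorem deriv_polyGaussian (b : ℝ) (P : ℝ[X]) :
    deriv (polyGaussian b P) = polyGaussian b (derivative P - C b * X * P) := by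
  funext x
  refine ((P.hasDerivAt x).mul (hasDerivAt_exp_mul_sq_div_two (-b) x)).deriv.trans ?_
  simp only [polyGaussian, eval_sub, eval_mul, eval_C, eval_X]
  ring

theorem lowering_polyGaussian (b : ℝ) (P : ℝ[X]) :
    lowering b (polyGaussian b P) = polyGaussian b (derivative P) := by
  funext x
  simp only [lowering, deriv_polyGaussian, polyGaussian, eval_sub, eval_mul, eval_C, eval_X,
    smul_eq_mul]
  ring

theorem raising_polyGaussian (b : ℝ) (P : ℝ[X]) :
    raising b (polyGaussian b P) = polyGaussian b (C (2 * b) * X * P - derivative P) := by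
  funext x
  simp only [raising, deriv_polyGaussian, polyGaussian, eval_sub, eval_mul, eval_C, eval_X,
    smul_eq_mul]
  ring

end PolyGaussian

section SpectralGap

open Polynomial

variable {E : Type*} [NormedAddCommGroup E]

theorem integral_polyGaussian_smul_raising [NormedSpace ℝ E] (b : ℝ) (P : ℝ[X]) {w : ℝ → E}
    (hw : ContDiff ℝ 1 w) (hwc : HasCompactSupport w) :
    ∫ x, polyGaussian b P x • raising b w x =
      ∫ x, polyGaussian b (derivative P) x • w x := by
  have := hw.continuous
  have := hw.continuous_deriv le_rfl
  have hcont (Q : ℝ[X]) : Continuous (polyGaussian b Q) := (contDiff_polyGaussian b Q).continuous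
  have hint (Q : ℝ[X]) : Integrable fun x ↦ polyGaussian b Q x • w x :=
    ((hcont Q).smul hw.continuous).integrable_of_hasCompactSupport hwc.smul_left
  have hraising : Integrable fun x ↦ polyGaussian b P x • raising b w x := by
    refine Continuous.integrable_of_hasCompactSupport ?_ (hwc.smul_left.sub hwc.deriv).smul_left
    have := hcont P
    unfold raising
    fun_prop
  simpa [lowering_polyGaussian] using integral_bilinear_raising
    (ContinuousLinearMap.lsmul ℝ ℝ (E := E)).flip b (hw.differentiable one_ne_zero)
    ((contDiff_polyGaussian b P).differentiable (by simp)) (hint P) hraising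
    (by simpa [lowering_polyGaussian] using hint (derivative P))

variable [InnerProductSpace ℝ E]

theorem two_mul_integral_inner_le {f g : ℝ → E} (hfg : Integrable fun x ↦ ⟪f x, g x⟫_ℝ)
    (hf : Integrable fun x ↦ ‖f x‖ ^ 2) (hg : Integrable fun x ↦ ‖g x‖ ^ 2) (a : ℝ) :
    2 * a * ∫ x, ⟪f x, g x⟫_ℝ ≤ a ^ 2 * (∫ x, ‖f x‖ ^ 2) + ∫ x, ‖g x‖ ^ 2 := by
  rw [← integral_const_mul, ← integral_const_mul, ← integral_add (hf.const_mul _) hg]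
  refine integral_mono (hfg.const_mul _) ((hf.const_mul _).add hg) fun x ↦ ?_
  have hsq := sq_nonneg ‖a • f x - g x‖
  rw [norm_sub_sq_real, norm_smul, mul_pow, norm_eq_abs, sq_abs, real_inner_smul_left] at hsq
  simp only
  linarith

variable {b : ℝ}

-- Solving `raising b w = f` lowers the number of orthogonality conditions by one, and
-- `raising b` and `lowering b` are adjoint with commutator `2b`.
theorem mul_integral_norm_sq_le_integral_norm_lowering_sq [CompleteSpace E] (hb : 0 < b) (K : ℕ)
    {f : ℝ → E} (hf : ContDiff ℝ 1 f) (hfc : HasCompactSupport f)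
    (horth : ∀ j < K, ∫ x, polyGaussian b (X ^ j) x • f x = 0) :
    2 * b * K * ∫ x, ‖f x‖ ^ 2 ≤ ∫ x, ‖lowering b f x‖ ^ 2 := by
  induction K generalizing f with
  | zero => simpa using integral_nonneg fun x ↦ sq_nonneg ‖lowering b f x‖
  | succ K ih =>
    obtain ⟨w, hw, hwc, rfl⟩ := exists_raising_eq b hf.continuous hfc
      (by simpa [polyGaussian] using horth 0 K.succ_pos)
    have hworth (j : ℕ) (hj : j < K) : ∫ x, polyGaussian b (X ^ j) x • w x = 0 := by
      have h := horth (j + 1) (by lia)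
      rw [integral_polyGaussian_smul_raising b _ hw hwc] at h
      simpa [polyGaussian, mul_assoc, mul_smul, integral_smul, Nat.cast_add_one_ne_zero] using h
    have hgap : 2 * b * (K + 1) * ∫ x, ‖w x‖ ^ 2 ≤ ∫ x, ‖raising b w x‖ ^ 2 := by
      rw [integral_norm_raising_sq hw hwc]
      linarith [ih hw hwc hworth]
    have hinner : Integrable fun x ↦ ⟪w x, lowering b (raising b w) x⟫_ℝ :=
      (hw.continuous.inner (continuous_lowering b hf)).integrable_of_hasCompactSupport <|
        hwc.mono fun x hx hwx ↦ hx (by simp [hwx])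
    have hadjoint : ∫ x, ‖raising b w x‖ ^ 2 = ∫ x, ⟪w x, lowering b (raising b w) x⟫_ℝ := by
      simp_rw [← real_inner_self_eq_norm_sq]
      refine integral_bilinear_raising (innerSL ℝ) b (hw.differentiable one_ne_zero)
        (hf.differentiable one_ne_zero) ?_ ?_ hinner
      · exact (hw.continuous.inner hf.continuous).integrable_of_hasCompactSupport <|
          hwc.mono fun x hx hwx ↦ hx (by simp [hwx])
      · exact (integrable_norm_sq_of_hasCompactSupport hf.continuous hfc).congr
          (.of_forall fun x ↦ (real_inner_self_eq_norm_sq _).symm)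
    have hamgm := two_mul_integral_inner_le hinner
      (integrable_norm_sq_of_hasCompactSupport hw.continuous hwc)
      (integrable_norm_lowering_sq hf hfc b) (2 * b * (K + 1))
    rw [← hadjoint] at hamgm
    have := mul_le_mul_of_nonneg_left hgap (by positivity : 0 ≤ 2 * b * (K + 1))
    push_cast
    linarith

theorem oscillator_gap [CompleteSpace E] (hb : 0 < b) (K : ℕ)
    {f : ℝ → E} (hf : ContDiff ℝ 1 f) (hfc : HasCompactSupport f)
    (horth : ∀ j < K, ∫ x, polyGaussian b (X ^ j) x • f x = 0) :
    (2 * K + 1) * b * ∫ x, ‖f x‖ ^ 2 ≤ ∫ x, (‖deriv f x‖ ^ 2 + ‖(b * x) • f x‖ ^ 2) := by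
  have hgap := mul_integral_norm_sq_le_integral_norm_lowering_sq hb K hf hfc horth
  rw [integral_norm_lowering_sq hf hfc] at hgap
  linarith

theorem shifted_oscillator_gap [CompleteSpace E] (hb : 0 < b) (a : ℝ) (K : ℕ)
    {f : ℝ → E} (hf : ContDiff ℝ 1 f) (hfc : HasCompactSupport f)
    (horth : ∀ j < K, ∫ x, polyGaussian b (X ^ j) (x + a) • f x = 0) :
    (2 * K + 1) * b * ∫ x, ‖f x‖ ^ 2 ≤
      ∫ x, (‖deriv f x‖ ^ 2 + ‖(b * (x + a)) • f x‖ ^ 2) := by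
  have hshift (g : ℝ → ℝ) : ∫ x, g x = ∫ x, g (x - a) := (integral_sub_right_eq_self g a).symm
  rw [hshift, hshift fun x ↦ ‖deriv f x‖ ^ 2 + _]
  have hgap := oscillator_gap (f := fun x ↦ f (x - a)) hb K
    (hf.comp (contDiff_id.sub contDiff_const))
    (hfc.comp_homeomorph (Homeomorph.subRight a)) fun j hj ↦ by
      simpa only [sub_add_cancel] using (integral_sub_right_eq_self
        (fun x ↦ polyGaussian b (X ^ j) (x + a) • f x) a).trans (horth j hj)
  simpa only [deriv_comp_sub_const, sub_add_cancel] using hgap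

end SpectralGap

/-! ### Hermite functions -/

section Hermite

open Polynomial

theorem integrable_polyGaussian_mul {b : ℝ} (hb : 0 < b) (P Q : ℝ[X]) :
    Integrable fun x ↦ polyGaussian b P x * polyGaussian b Q x := by
  suffices Integrable fun x ↦ (P * Q).eval x * exp (-b * x ^ 2) by
    refine this.congr (.of_forall fun x ↦ ?_)
    simp only [polyGaussian, eval_mul]
    rw [mul_mul_mul_comm, ← exp_add]
    ring_nf
  induction P * Q using Polynomial.induction_on' with
  | add p q hp hq => simpa only [eval_add, add_mul, Pi.add_def] using hp.add hq
  | monomial n a =>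
    have hn : (-1 : ℝ) < n := by linarith [n.cast_nonneg (α := ℝ)]
    simpa [mul_assoc] using (integrable_rpow_mul_exp_neg_mul_sq hb hn).const_mul a

theorem memLp_polyGaussian {b : ℝ} (hb : 0 < b) (P : ℝ[X]) : MemLp (polyGaussian b P) 2 := by
  rw [memLp_two_iff_integrable_sq (contDiff_polyGaussian b P).continuous.aestronglyMeasurable]
  simpa only [sq] using integrable_polyGaussian_mul hb P P

/-- Hermite polynomials for the weight `exp(-b x²)`, with leading coefficient `(2 b) ^ n`. -/
def hermitePoly (b : ℝ) : ℕ → ℝ[X]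
  | 0 => 1
  | n + 1 => C (2 * b) * X * hermitePoly b n - derivative (hermitePoly b n)

theorem derivative_hermitePoly_succ (b : ℝ) (n : ℕ) :
    derivative (hermitePoly b (n + 1)) = (2 * b * (n + 1)) • hermitePoly b n := by
  induction n with
  | zero => simp [hermitePoly, smul_eq_C_mul]
  | succ n ih =>
    rw [hermitePoly]
    simp only [derivative_sub, derivative_mul, ih, derivative_C, derivative_X, derivative_smul]
    rw [hermitePoly]
    simp only [smul_eq_C_mul, map_mul, map_add, map_one, Nat.cast_add, Nat.cast_one]
    ring

variable {b : ℝ}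

theorem integral_hermitePoly_succ_mul (hb : 0 < b) (m : ℕ) (P : ℝ[X]) :
    ∫ x, polyGaussian b (hermitePoly b (m + 1)) x * polyGaussian b P x =
      ∫ x, polyGaussian b (hermitePoly b m) x * polyGaussian b (derivative P) x := by
  have hdiff (Q : ℝ[X]) : Differentiable ℝ (polyGaussian b Q) :=
    (contDiff_polyGaussian b Q).differentiable (by simp)
  have hint := integrable_polyGaussian_mul hb
  simpa [raising_polyGaussian, lowering_polyGaussian, hermitePoly] using
    integral_bilinear_raising (ContinuousLinearMap.mul ℝ ℝ) b (hdiff (hermitePoly b m)) (hdiff P)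
      (hint _ _) (by simpa [raising_polyGaussian] using hint _ _)
      (by simpa [lowering_polyGaussian] using hint _ _)

theorem integral_derivative_hermitePoly_mul (hb : 0 < b) (m : ℕ) (P : ℝ[X]) :
    ∫ x, polyGaussian b (derivative (hermitePoly b m)) x * polyGaussian b (derivative P) x =
      2 * b * m * ∫ x, polyGaussian b (hermitePoly b m) x * polyGaussian b P x := by
  cases m with
  | zero => simp [hermitePoly, polyGaussian]
  | succ m =>
    simp only [integral_hermitePoly_succ_mul hb, derivative_hermitePoly_succ, polyGaussian_smul,
      mul_assoc, integral_const_mul, Nat.cast_succ]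

theorem integral_hermitePoly_mul_hermitePoly (hb : 0 < b) (m n : ℕ) :
    ∫ x, polyGaussian b (hermitePoly b m) x * polyGaussian b (hermitePoly b n) x =
      if m = n then (2 * b) ^ n * n.factorial * √(π / b) else 0 := by
  have hzero (m : ℕ) : ∫ x, polyGaussian b (hermitePoly b (m + 1)) x *
      polyGaussian b (hermitePoly b 0) x = 0 := by
    rw [integral_hermitePoly_succ_mul hb]
    simp [hermitePoly, polyGaussian]
  induction n generalizing m with
  | zero =>
    cases m with
    | zero =>
      simp only [hermitePoly, polyGaussian, eval_one, one_mul, pow_zero, Nat.factorial_zero,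
        Nat.cast_one, if_true, ← integral_gaussian, ← exp_add]
      ring_nf
    | succ m => simpa using hzero m
  | succ n ih =>
    cases m with
    | zero => simpa [mul_comm] using hzero n
    | succ m =>
      simp_rw [integral_hermitePoly_succ_mul hb, derivative_hermitePoly_succ, polyGaussian_smul,
        mul_left_comm _ (2 * b * _), integral_const_mul, ih, Nat.succ_inj, Nat.factorial_succ]
      split_ifs
      · push_cast
        ring
      · rw [mul_zero]

theorem integral_hermitePoly_energy (hb : 0 < b) (m n : ℕ) :
    (∫ x, deriv (polyGaussian b (hermitePoly b m)) x * deriv (polyGaussian b (hermitePoly b n)) x) +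
      ∫ x, (b * x * polyGaussian b (hermitePoly b m) x) *
        (b * x * polyGaussian b (hermitePoly b n) x) =
      (2 * n + 1) * b *
        ∫ x, polyGaussian b (hermitePoly b m) x * polyGaussian b (hermitePoly b n) x := by
  have hint := integrable_polyGaussian_mul hb
  have hladder := integral_congr_ae (μ := volume) (.of_forall <| inner_lowering_add_inner_raising b
    (polyGaussian b (hermitePoly b m)) (polyGaussian b (hermitePoly b n)))
  have hraising (n : ℕ) : raising b (polyGaussian b (hermitePoly b n)) =
      polyGaussian b (hermitePoly b (n + 1)) := raising_polyGaussian b _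
  simp only [lowering_polyGaussian, hraising, deriv_polyGaussian, RCLike.inner_apply', conj_trivial,
    smul_eq_mul, mul_polyGaussian] at hladder ⊢
  rw [integral_add (hint _ _) (hint _ _), integral_const_mul, integral_add (hint _ _) (hint _ _),
    integral_hermitePoly_succ_mul hb, derivative_hermitePoly_succ,
    integral_derivative_hermitePoly_mul hb] at hladder
  simp only [polyGaussian_smul, mul_left_comm _ (2 * b * _), integral_const_mul] at hladder
  rw [integral_hermitePoly_mul_hermitePoly hb] at hladder ⊢
  split_ifs at hladder ⊢ with hmn
  · subst hmn
    linarith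
  · linarith

/-- The `n`-th eigenfunction of the harmonic oscillator `-d²/dx² + b² x²`, normalised in `L²`. -/
def oscillatorFun (b : ℝ) (n : ℕ) : ℝ → ℝ :=
  polyGaussian b ((√((2 * b) ^ n * n.factorial * √(π / b)))⁻¹ • hermitePoly b n)

theorem contDiff_oscillatorFun (n : ℕ) : ContDiff ℝ ∞ (oscillatorFun b n) :=
  contDiff_polyGaussian b _

theorem memLp_oscillatorFun (hb : 0 < b) (n : ℕ) : MemLp (oscillatorFun b n) 2 :=
  memLp_polyGaussian hb _

theorem memLp_deriv_oscillatorFun (hb : 0 < b) (n : ℕ) : MemLp (deriv (oscillatorFun b n)) 2 := by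
  simpa only [oscillatorFun, deriv_polyGaussian] using memLp_polyGaussian hb _

theorem memLp_mul_oscillatorFun (hb : 0 < b) (a : ℝ) (n : ℕ) :
    MemLp (fun x ↦ a * x * oscillatorFun b n x) 2 := by
  simpa only [oscillatorFun, mul_polyGaussian] using memLp_polyGaussian hb _

theorem integral_oscillatorFun_mul_oscillatorFun (hb : 0 < b) (m n : ℕ) :
    ∫ x, oscillatorFun b m x * oscillatorFun b n x = if m = n then 1 else 0 := by
  simp only [oscillatorFun, polyGaussian_smul, mul_mul_mul_comm _ (polyGaussian b _ _),
    integral_const_mul, integral_hermitePoly_mul_hermitePoly hb]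
  split_ifs with hmn
  · subst hmn
    rw [← mul_inv, mul_self_sqrt (by positivity), inv_mul_cancel₀ (by positivity)]
  · rw [mul_zero]

theorem integral_oscillatorFun_energy (hb : 0 < b) (m n : ℕ) :
    (∫ x, deriv (oscillatorFun b m) x * deriv (oscillatorFun b n) x) +
      ∫ x, (b * x * oscillatorFun b m x) * (b * x * oscillatorFun b n x) =
      if m = n then (2 * n + 1) * b else 0 := by
  have horth := integral_oscillatorFun_mul_oscillatorFun hb m n
  obtain ⟨s, hs⟩ : ∃ s : ℕ → ℝ, ∀ n, oscillatorFun b n = fun x ↦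
      s n * polyGaussian b (hermitePoly b n) x := ⟨_, fun n ↦ funext (polyGaussian_smul b _ _)⟩
  simp only [hs, deriv_const_mul_field, mul_left_comm (b * _), mul_mul_mul_comm (s m),
    integral_const_mul] at horth ⊢
  rw [← mul_add, integral_hermitePoly_energy hb, mul_left_comm, horth, mul_ite, mul_one, mul_zero]

end Hermite

/-! ### Plane waves and Fourier series in the transverse variable -/

section PlaneWave

/-- The plane wave `y ↦ e^{iky}`. -/
def planeWave (k y : ℝ) : ℂ := Complex.exp ((k * y : ℝ) * Complex.I)

/-- The wave number `2πm/L` of the `m`-th Fourier mode of period `L`. -/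
def waveNumber (L : ℝ) (m : ℤ) : ℝ := 2 * π * m / L

theorem norm_planeWave (k y : ℝ) : ‖planeWave k y‖ = 1 := Complex.norm_exp_ofReal_mul_I _

theorem contDiff_planeWave (k : ℝ) : ContDiff ℝ ∞ (planeWave k) := by
  unfold planeWave
  have : ContDiff ℝ ∞ fun y : ℝ ↦ ((k * y : ℝ) : ℂ) :=
    Complex.ofRealCLM.contDiff.comp (contDiff_const.mul contDiff_id)
  fun_prop

@[fun_prop]
theorem continuous_planeWave (k : ℝ) : Continuous (planeWave k) := (contDiff_planeWave k).continuous

theorem hasDerivAt_planeWave (k y : ℝ) :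
    HasDerivAt (planeWave k) (k * Complex.I * planeWave k y) y := by
  refine ((((hasDerivAt_id y).const_mul k).ofReal_comp).mul_const Complex.I).cexp.congr_deriv ?_
  simp only [planeWave, id]
  push_cast
  ring

theorem fourierCoeffOn_eq_integral_planeWave {L : ℝ} (hL : 0 < L) (h : ℝ → ℂ) (m : ℤ) :
    fourierCoeffOn (by linarith : -L / 2 < L / 2) h m =
      (L⁻¹ : ℝ) • ∫ y in -L / 2..L / 2, planeWave (-waveNumber L m) y * h y := by
  have hperiod : L / 2 - -L / 2 = L := by ring
  rw [fourierCoeffOn_eq_integral, hperiod, one_div]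
  congr 1
  refine intervalIntegral.integral_congr fun y _ ↦ ?_
  simp only [smul_eq_mul, fourier_coe_apply, planeWave, waveNumber]
  congr 2
  push_cast
  ring

theorem hasSum_sq_norm_integral_planeWave {L : ℝ} (hL : 0 < L) {h : ℝ → ℂ} (hh : MemLp h 2)
    (hsupp : ∀ y ∉ Set.Ioc (-L / 2) (L / 2), h y = 0) :
    HasSum (fun m : ℤ ↦ L⁻¹ * ‖∫ y, planeWave (-waveNumber L m) y * h y‖ ^ 2)
      (∫ y, ‖h y‖ ^ 2) := by
  have hlt : -L / 2 < L / 2 := by linarith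
  have hline {E : Type} [NormedAddCommGroup E] [NormedSpace ℝ E] {g : ℝ → E}
      (hg : ∀ y, h y = 0 → g y = 0) : ∫ y in -L / 2..L / 2, g y = ∫ y, g y := by
    rw [intervalIntegral.integral_of_le hlt.le]
    exact setIntegral_eq_integral_of_forall_compl_eq_zero fun y hy ↦ hg y (hsupp y hy)
  have hparseval := (hasSum_sq_fourierCoeffOn hlt (hh.restrict _)).mul_left L
  simp_rw [fourierCoeffOn_eq_integral_planeWave hL] at hparseval
  rw [hline fun y hy ↦ by simp [hy], smul_eq_mul, (by ring : L / 2 - -L / 2 = L),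
    mul_inv_cancel_left₀ hL.ne'] at hparseval
  refine hparseval.congr_fun fun m ↦ ?_
  rw [hline fun y hy ↦ by simp [hy], norm_smul, norm_inv, norm_of_nonneg hL.le]
  field_simp

end PlaneWave

section PartialDerivatives

variable {v : ℝ × ℝ → ℂ}

theorem continuous_dX (hv : ContDiff ℝ 1 v) : Continuous (dX v) :=
  (hv.continuous_fderiv one_ne_zero).clm_apply continuous_const

theorem continuous_dY (hv : ContDiff ℝ 1 v) : Continuous (dY v) :=
  (hv.continuous_fderiv one_ne_zero).clm_apply continuous_const

theorem hasCompactSupport_dX (hvc : HasCompactSupport v) : HasCompactSupport (dX v) :=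
  hvc.fderiv_apply (𝕜 := ℝ) (1, 0)

theorem hasCompactSupport_dY (hvc : HasCompactSupport v) : HasCompactSupport (dY v) :=
  hvc.fderiv_apply (𝕜 := ℝ) (0, 1)

theorem hasDerivAt_dX {p : ℝ × ℝ} (hv : DifferentiableAt ℝ v p) :
    HasDerivAt (fun x ↦ v (x, p.2)) (dX v p) p.1 :=
  hv.hasFDerivAt.comp_hasDerivAt p.1 ((hasDerivAt_id p.1).prodMk (hasDerivAt_const p.1 p.2))

theorem hasDerivAt_dY {p : ℝ × ℝ} (hv : DifferentiableAt ℝ v p) :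
    HasDerivAt (fun y ↦ v (p.1, y)) (dY v p) p.2 :=
  hv.hasFDerivAt.comp_hasDerivAt p.2 ((hasDerivAt_const p.2 p.1).prodMk (hasDerivAt_id p.2))

theorem hasCompactSupport_slice {g : ℝ × ℝ → ℂ} (hgc : HasCompactSupport g) (x : ℝ) :
    HasCompactSupport fun y ↦ g (x, y) :=
  hgc.comp_isClosedEmbedding (.of_continuous_injective_isClosedMap (by fun_prop)
    (Prod.mk_right_injective x) (isClosedMap_prodMk_left x))

end PartialDerivatives

section TransverseFourier

/-- The Fourier transform of `g` in its second variable, at wave number `k`. -/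
def transverseFourier (g : ℝ × ℝ → ℂ) (k x : ℝ) : ℂ := ∫ y, planeWave (-k) y * g (x, y)

/-- The momentum `-i∂_y + bx` in the Landau gauge `A = (0, bx)`. -/
def landauMomentum (b : ℝ) (v : ℝ × ℝ → ℂ) (p : ℝ × ℝ) : ℂ :=
  -Complex.I * dY v p + ((b * p.1 : ℝ) : ℂ) * v p

variable {g v : ℝ × ℝ → ℂ}

theorem transverseFourier_eq_zero {x : ℝ} (hx : ∀ y, g (x, y) = 0) (k : ℝ) :
    transverseFourier g k x = 0 := by
  simp [transverseFourier, hx]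

theorem hasCompactSupport_transverseFourier (hgc : HasCompactSupport g) (k : ℝ) :
    HasCompactSupport (transverseFourier g k) := by
  refine .intro (hgc.isCompact.image continuous_fst) fun x hx ↦
    transverseFourier_eq_zero (fun y ↦ ?_) k
  exact image_eq_zero_of_notMem_tsupport fun h ↦ hx ⟨_, h, rfl⟩

theorem continuous_transverseFourier (hg : Continuous g) (hgc : HasCompactSupport g) (k : ℝ) :
    Continuous (transverseFourier g k) := by
  rw [← continuousOn_univ]
  refine continuousOn_integral_of_compact_support (hgc.isCompact.image continuous_snd)
    (Continuous.continuousOn ?_) fun x y _ hy ↦ ?_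
  · simp only [Function.uncurry_def]
    fun_prop
  · rw [image_eq_zero_of_notMem_tsupport fun h ↦ hy ⟨_, h, rfl⟩, mul_zero]

theorem integrable_planeWave_mul (hg : Continuous g) (hgc : HasCompactSupport g) (k x : ℝ) :
    Integrable fun y ↦ planeWave k y * g (x, y) :=
  Continuous.integrable_of_hasCompactSupport (by fun_prop) (hasCompactSupport_slice hgc x).mul_left

theorem hasDerivAt_transverseFourier (hv : ContDiff ℝ 1 v) (hvc : HasCompactSupport v) (k x : ℝ) :
    HasDerivAt (transverseFourier v k) (transverseFourier (dX v) k x) x := by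
  have := hv.continuous
  have hcont := continuous_dX hv
  have hcompact := hasCompactSupport_dX hvc
  obtain ⟨C, hC⟩ := hcont.bounded_above_of_compact_support hcompact
  have hproj : IsCompact (Prod.snd '' tsupport (dX v)) := hcompact.isCompact.image continuous_snd
  refine (hasDerivAt_integral_of_dominated_loc_of_deriv_le
    (F := fun x y ↦ planeWave (-k) y * v (x, y)) (F' := fun x y ↦ planeWave (-k) y * dX v (x, y))
    (bound := (Prod.snd '' tsupport (dX v)).indicator fun _ ↦ C) univ_mem
    (.of_forall fun x ↦ Continuous.aestronglyMeasurable (by fun_prop))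
    (integrable_planeWave_mul hv.continuous hvc _ x)
    (Continuous.aestronglyMeasurable (by fun_prop)) (.of_forall fun y x _ ↦ ?_)
    ((integrable_indicator_iff hproj.measurableSet).2 (integrableOn_const hproj.measure_ne_top))
    (.of_forall fun y x _ ↦
      (hasDerivAt_dX (hv.differentiable one_ne_zero (x, y))).const_mul _)).2
  rw [norm_mul, norm_planeWave, one_mul]
  by_cases hy : y ∈ Prod.snd '' tsupport (dX v)
  · rw [Set.indicator_of_mem hy]
    exact hC _
  · rw [Set.indicator_of_notMem hy, image_eq_zero_of_notMem_tsupport fun h ↦ hy ⟨_, h, rfl⟩,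
      norm_zero]

theorem deriv_transverseFourier (hv : ContDiff ℝ 1 v) (hvc : HasCompactSupport v) (k : ℝ) :
    deriv (transverseFourier v k) = transverseFourier (dX v) k :=
  funext fun x ↦ (hasDerivAt_transverseFourier hv hvc k x).deriv

theorem contDiff_transverseFourier (hv : ContDiff ℝ 1 v) (hvc : HasCompactSupport v) (k : ℝ) :
    ContDiff ℝ 1 (transverseFourier v k) := by
  refine contDiff_one_iff_deriv.2
    ⟨fun x ↦ (hasDerivAt_transverseFourier hv hvc k x).differentiableAt, ?_⟩
  rw [deriv_transverseFourier hv hvc]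
  exact continuous_transverseFourier (continuous_dX hv) (hasCompactSupport_dX hvc) k

theorem integrable_sq_norm_transverseFourier {g : ℝ × ℝ → ℂ} (hg : Continuous g)
    (hgc : HasCompactSupport g) (k : ℝ) : Integrable fun x ↦ ‖transverseFourier g k x‖ ^ 2 :=
  integrable_norm_sq_of_hasCompactSupport (continuous_transverseFourier hg hgc k)
    (hasCompactSupport_transverseFourier hgc k)

theorem continuous_landauMomentum (b : ℝ) (hv : ContDiff ℝ 1 v) :
    Continuous (landauMomentum b v) := by
  have := hv.continuous
  have := continuous_dY hv
  unfold landauMomentum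
  fun_prop

theorem hasCompactSupport_landauMomentum (b : ℝ) (hvc : HasCompactSupport v) :
    HasCompactSupport (landauMomentum b v) :=
  (hasCompactSupport_dY hvc).mul_left.add hvc.mul_left

theorem transverseFourier_landauMomentum (b : ℝ) (hv : ContDiff ℝ 1 v) (hvc : HasCompactSupport v)
    (k x : ℝ) :
    transverseFourier (landauMomentum b v) k x = (k + b * x : ℝ) * transverseFourier v k x := by
  have hint := integrable_planeWave_mul hv.continuous hvc (-k) x
  have hintY := integrable_planeWave_mul (continuous_dY hv) (hasCompactSupport_dY hvc) (-k) x
  have hderiv (y : ℝ) : HasDerivAt (fun y ↦ planeWave (-k) y * v (x, y))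
      (-(k * Complex.I) * (planeWave (-k) y * v (x, y)) + planeWave (-k) y * dY v (x, y)) y := by
    refine ((hasDerivAt_planeWave (-k) y).mul
      (hasDerivAt_dY (hv.differentiable one_ne_zero (x, y)))).congr_deriv ?_
    push_cast
    ring
  have hparts := integral_eq_zero_of_hasDerivAt_of_integrable hderiv
    ((hint.const_mul _).add hintY) hint
  rw [integral_add (hint.const_mul _) hintY, integral_const_mul] at hparts
  have hexpand (y : ℝ) : planeWave (-k) y * landauMomentum b v (x, y) =
      -Complex.I * (planeWave (-k) y * dY v (x, y)) +
        (b * x : ℝ) * (planeWave (-k) y * v (x, y)) := by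
    rw [landauMomentum]
    ring
  simp_rw [transverseFourier, hexpand]
  rw [integral_add (hintY.const_mul _) (hint.const_mul _), integral_const_mul, integral_const_mul]
  push_cast
  linear_combination -Complex.I * hparts -
    k * (∫ y, planeWave (-k) y * v (x, y)) * Complex.I_sq

theorem hasSum_integral_sq_norm_transverseFourier {L : ℝ} (hL : 0 < L) (hg : Continuous g)
    (hgc : HasCompactSupport g) (hsupp : ∀ p, p.2 ∉ Set.Ioc (-L / 2) (L / 2) → g p = 0) :
    HasSum (fun m : ℤ ↦ L⁻¹ * ∫ x, ‖transverseFourier g (waveNumber L m) x‖ ^ 2)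
      (∫ p, ‖g p‖ ^ 2) := by
  have hgsq : Integrable (fun p ↦ ‖g p‖ ^ 2) ((volume : Measure ℝ).prod volume) :=
    integrable_norm_sq_of_hasCompactSupport hg hgc
  have hslice (x : ℝ) : HasSum
      (fun m : ℤ ↦ L⁻¹ * ‖transverseFourier g (waveNumber L m) x‖ ^ 2) (∫ y, ‖g (x, y)‖ ^ 2) :=
    hasSum_sq_norm_integral_planeWave hL
      ((by fun_prop : Continuous fun y ↦ g (x, y)).memLp_of_hasCompactSupport
        (hasCompactSupport_slice hgc x)) fun y hy ↦ hsupp (x, y) hy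
  rw [Measure.volume_eq_prod, integral_prod _ hgsq]
  simp_rw [← integral_const_mul]
  refine hasSum_integral_of_dominated_convergence
    (fun m x ↦ L⁻¹ * ‖transverseFourier g (waveNumber L m) x‖ ^ 2) (fun m ↦ ?_)
    (fun m ↦ .of_forall fun x ↦ (norm_of_nonneg (by positivity)).le)
    (.of_forall fun x ↦ (hslice x).summable) ?_ (.of_forall hslice)
  · have := continuous_transverseFourier hg hgc (waveNumber L m)
    exact Continuous.aestronglyMeasurable (by fun_prop)
  · simp_rw [(hslice _).tsum_eq]
    exact hgsq.integral_prod_left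

end TransverseFourier

/-! ### The Landau gauge -/

section LandauGauge

/-- The phase `e^{ibxy/2}` relating the symmetric gauge to the Landau gauge. -/
def gaugePhase (b : ℝ) (p : ℝ × ℝ) : ℂ := planeWave (b / 2) (p.1 * p.2)

/-- The quadratic form of the Landau Hamiltonian in the Landau gauge `A = (0, bx)`. -/
def landauEnergy (b : ℝ) (v : ℝ × ℝ → ℂ) : ℝ :=
  ∫ p, (‖dX v p‖ ^ 2 + ‖landauMomentum b v p‖ ^ 2)

theorem norm_gaugePhase (b : ℝ) (p : ℝ × ℝ) : ‖gaugePhase b p‖ = 1 := norm_planeWave _ _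

theorem gaugePhase_mul_gaugePhase_neg (b : ℝ) (p : ℝ × ℝ) :
    gaugePhase b p * gaugePhase (-b) p = 1 := by
  rw [gaugePhase, gaugePhase, planeWave, planeWave, ← Complex.exp_add, ← Complex.exp_zero]
  push_cast
  ring_nf

theorem contDiff_gaugePhase (b : ℝ) : ContDiff ℝ ∞ (gaugePhase b) :=
  (contDiff_planeWave (b / 2)).comp (contDiff_fst.mul contDiff_snd)

theorem fderiv_gaugePhase_mul (b : ℝ) {v : ℝ × ℝ → ℂ} {p : ℝ × ℝ} (hv : DifferentiableAt ℝ v p)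
    (w : ℝ × ℝ) : fderiv ℝ (fun p ↦ gaugePhase b p * v p) p w =
      gaugePhase b p * (fderiv ℝ v p w +
        (b / 2 * (p.1 * w.2 + p.2 * w.1) : ℝ) * Complex.I * v p) := by
  have hphase : HasFDerivAt (gaugePhase b) _ p :=
    (hasDerivAt_planeWave (b / 2) (p.1 * p.2)).hasFDerivAt.comp p
      (hasFDerivAt_fst.mul hasFDerivAt_snd)
  have hprod : HasFDerivAt (fun p ↦ gaugePhase b p * v p) _ p := hphase.mul hv.hasFDerivAt
  rw [hprod.fderiv]
  simp only [gaugePhase, Complex.ofReal_div, Complex.ofReal_ofNat, ContinuousLinearMap.comp_add,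
    ContinuousLinearMap.comp_smulₛₗ, ringHom_apply, smul_add, add_apply, smul_apply, smul_eq_mul,
    ContinuousLinearMap.comp_apply, ContinuousLinearMap.coe_snd',
    ContinuousLinearMap.toSpanSingleton_apply, Complex.real_smul, ContinuousLinearMap.coe_fst',
    Complex.ofReal_mul, Complex.ofReal_add]
  ring

theorem qb_gaugePhase_mul (b : ℝ) {v : ℝ × ℝ → ℂ} (hv : Differentiable ℝ v) :
    qb b (fun p ↦ gaugePhase b p * v p) = landauEnergy b v := by
  refine integral_congr_ae (.of_forall fun p ↦ ?_)
  have hX : -Complex.I * dX (fun p ↦ gaugePhase b p * v p) p -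
      (b * p.2 / 2 : ℝ) * (gaugePhase b p * v p) = gaugePhase b p * (-Complex.I * dX v p) := by
    simp only [dX, fderiv_gaugePhase_mul b (hv p)]
    push_cast
    linear_combination (-(b : ℂ) * p.2 / 2 * gaugePhase b p * v p) * Complex.I_sq
  have hY : -Complex.I * dY (fun p ↦ gaugePhase b p * v p) p +
      (b * p.1 / 2 : ℝ) * (gaugePhase b p * v p) = gaugePhase b p * landauMomentum b v p := by
    simp only [dY, landauMomentum, fderiv_gaugePhase_mul b (hv p)]
    push_cast
    linear_combination (-(b : ℂ) * p.1 / 2 * gaugePhase b p * v p) * Complex.I_sq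
  simp only [hX, hY, norm_mul, norm_gaugePhase, norm_neg, Complex.norm_I, one_mul]

end LandauGauge

/-! ### Upper bound -/

section UpperBound

variable {b lam k : ℝ} {v : ℝ × ℝ → ℂ}

/-- The test function `(x + k/b)ʲ e^{-b(x + k/b)²/2} e^{-iky}`; a function orthogonal to the first
`K` of these has no component on the first `K` levels of the oscillator of wave number `k`. -/
def modeTest (b k : ℝ) (j : ℕ) (p : ℝ × ℝ) : ℂ :=
  polyGaussian b (.X ^ j) (p.1 + k / b) * planeWave (-k) p.2

theorem continuous_modeTest (b k : ℝ) (j : ℕ) : Continuous (modeTest b k j) := by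
  have := (contDiff_polyGaussian b (.X ^ j)).continuous
  unfold modeTest
  fun_prop

theorem integral_modeTest_mul (b k : ℝ) (j : ℕ) (hv : Continuous v) (hvc : HasCompactSupport v) :
    ∫ p, modeTest b k j p * v p =
      ∫ x, polyGaussian b (.X ^ j) (x + k / b) • transverseFourier v k x := by
  have := continuous_modeTest b k j
  have hint : Integrable (fun p ↦ modeTest b k j p * v p) (volume.prod volume) :=
    Continuous.integrable_of_hasCompactSupport (by fun_prop) hvc.mul_left
  rw [Measure.volume_eq_prod, integral_prod _ hint]
  simp_rw [modeTest, mul_assoc, integral_const_mul, transverseFourier, Complex.real_smul]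

theorem low_mode_energy_le (hb : 0 < b) {K : ℕ} (hK : lam ≤ (2 * K + 1) * b)
    (hv : ContDiff ℝ 1 v) (hvc : HasCompactSupport v)
    (horth : ∀ j < K, ∫ p, modeTest b k j p * v p = 0) :
    lam * ∫ x, ‖transverseFourier v k x‖ ^ 2 ≤ (∫ x, ‖transverseFourier (dX v) k x‖ ^ 2) +
      ∫ x, ‖transverseFourier (landauMomentum b v) k x‖ ^ 2 := by
  have hgap := shifted_oscillator_gap hb (k / b) K (contDiff_transverseFourier hv hvc k)
    (hasCompactSupport_transverseFourier hvc k) fun j hj ↦ by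
      rw [← integral_modeTest_mul b k j hv.continuous hvc, horth j hj]
  have hpot (x : ℝ) : (b * (x + k / b)) • transverseFourier v k x =
      transverseFourier (landauMomentum b v) k x := by
    rw [transverseFourier_landauMomentum b hv hvc, Complex.real_smul, mul_add,
      mul_div_cancel₀ _ hb.ne', add_comm]
  simp_rw [hpot, deriv_transverseFourier hv hvc] at hgap
  rw [integral_add
    (integrable_sq_norm_transverseFourier (continuous_dX hv) (hasCompactSupport_dX hvc) k)
    (integrable_sq_norm_transverseFourier (continuous_landauMomentum b hv)
      (hasCompactSupport_landauMomentum b hvc) k)] at hgap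
  exact (mul_le_mul_of_nonneg_right hK (by positivity)).trans hgap

theorem high_mode_energy_le (hv : ContDiff ℝ 1 v) (hvc : HasCompactSupport v)
    (hk : ∀ p, v p ≠ 0 → lam ≤ (k + b * p.1) ^ 2) :
    lam * ∫ x, ‖transverseFourier v k x‖ ^ 2 ≤ (∫ x, ‖transverseFourier (dX v) k x‖ ^ 2) +
      ∫ x, ‖transverseFourier (landauMomentum b v) k x‖ ^ 2 := by
  refine le_add_of_nonneg_of_le (by positivity) ?_
  rw [← integral_const_mul]
  refine integral_mono ((integrable_sq_norm_transverseFourier hv.continuous hvc k).const_mul lam)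
    (integrable_sq_norm_transverseFourier (continuous_landauMomentum b hv)
      (hasCompactSupport_landauMomentum b hvc) k) fun x ↦ ?_
  simp only [transverseFourier_landauMomentum b hv hvc, norm_mul, mul_pow, Complex.norm_real,
    norm_eq_abs, sq_abs]
  by_cases hx : ∃ y, v (x, y) ≠ 0
  · obtain ⟨y, hy⟩ := hx
    exact mul_le_mul_of_nonneg_right (hk (x, y) hy) (by positivity)
  · push Not at hx
    simp [transverseFourier_eq_zero hx]

theorem mul_integral_sq_norm_le_landauEnergy {L : ℝ} (hL : 0 < L) (hv : ContDiff ℝ 1 v)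
    (hvc : HasCompactSupport v) (hsupp : ∀ p ∈ tsupport v, p.2 ∈ Set.Ioc (-L / 2) (L / 2))
    (hmode : ∀ m : ℤ, lam * ∫ x, ‖transverseFourier v (waveNumber L m) x‖ ^ 2 ≤
      (∫ x, ‖transverseFourier (dX v) (waveNumber L m) x‖ ^ 2) +
        ∫ x, ‖transverseFourier (landauMomentum b v) (waveNumber L m) x‖ ^ 2) :
    lam * ∫ p, ‖v p‖ ^ 2 ≤ landauEnergy b v := by
  have hzero (p : ℝ × ℝ) (hp : p.2 ∉ Set.Ioc (-L / 2) (L / 2)) : v p = 0 ∧ fderiv ℝ v p = 0 :=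
    ⟨image_eq_zero_of_notMem_tsupport fun h ↦ hp (hsupp p h),
      Function.notMem_support.1 fun h ↦ hp (hsupp p (support_fderiv_subset ℝ h))⟩
  have hX := continuous_dX hv
  have hXc := hasCompactSupport_dX hvc
  have hY := continuous_landauMomentum b hv
  have hYc := hasCompactSupport_landauMomentum b hvc
  have hsum := hasSum_integral_sq_norm_transverseFourier hL hv.continuous hvc
    fun p hp ↦ (hzero p hp).1
  have hsumX := hasSum_integral_sq_norm_transverseFourier hL hX hXc
    fun p hp ↦ by simp [dX, (hzero p hp).2]
  have hsumY := hasSum_integral_sq_norm_transverseFourier hL hY hYc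
    fun p hp ↦ by simp [landauMomentum, dY, hzero p hp]
  rw [landauEnergy, integral_add (integrable_norm_sq_of_hasCompactSupport hX hXc)
    (integrable_norm_sq_of_hasCompactSupport hY hYc)]
  refine hasSum_le (fun m ↦ ?_) (hsum.mul_left lam) (hsumX.add hsumY)
  rw [mul_left_comm, ← mul_add]
  exact mul_le_mul_of_nonneg_left (hmode m) (by positivity)

theorem finrank_le_card_of_integral_eq_zero {𝕜 α ι : Type*} [RCLike 𝕜] [MeasurableSpace α]
    {μ : Measure α} [Fintype ι] (V : Submodule 𝕜 (α → 𝕜)) (φ : ι → α → 𝕜)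
    (hint : ∀ u ∈ V, ∀ i, Integrable (fun p ↦ φ i p * u p) μ)
    (hzero : ∀ u ∈ V, (∀ i, ∫ p, φ i p * u p ∂μ = 0) → u = 0) :
    Module.finrank 𝕜 V ≤ Fintype.card ι := by
  let pairing : V →ₗ[𝕜] ι → 𝕜 :=
    { toFun u i := ∫ p, φ i p * u.1 p ∂μ
      map_add' u w := funext fun i ↦ by
        simp [mul_add, integral_add (hint u u.2 i) (hint w w.2 i)]
      map_smul' c u := funext fun i ↦ by simp [mul_left_comm, integral_const_mul] }
  have hinj : Function.Injective pairing :=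
    (injective_iff_map_eq_zero pairing).2 fun u hu ↦ Subtype.ext (hzero u u.2 (congrFun hu))
  simpa using LinearMap.finrank_le_finrank_of_injective hinj

theorem le_add_mul_sq_of_le_abs {R₁ : ℝ} (hb : 0 < b) (hk : b * R₁ / 2 + √lam ≤ |k|) {x : ℝ}
    (hx : x ∈ Set.Ioo (-R₁ / 2) (R₁ / 2)) : lam ≤ (k + b * x) ^ 2 := by
  have hbx : |b * x| ≤ b * R₁ / 2 := by
    rw [abs_mul, abs_of_pos hb, mul_div_assoc]
    exact mul_le_mul_of_nonneg_left (abs_le.2 ⟨by linarith [hx.1], hx.2.le⟩) hb.le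
  have hsqrt : √lam ≤ |k + b * x| := by
    have htriangle := abs_sub (k + b * x) (b * x)
    rw [add_sub_cancel_right] at htriangle
    linarith
  rw [← sq_abs]
  exact (sqrt_le_iff.1 hsqrt).2

theorem eq_zero_of_orthogonal_modeTest {R₁ R₂ : ℝ} (hb : 0 < b) (hR₂ : 0 < R₂) {K : ℕ}
    (hK : lam ≤ (2 * K + 1) * b) {s : Finset ℤ}
    (hs : ∀ m ∉ s, b * R₁ / 2 + √lam ≤ |waveNumber R₂ m|) {u : ℝ × ℝ → ℂ}
    (hu : IsTestOn (rectR R₁ R₂) u) (hlt : u ≠ 0 → qb b u < lam * ∫ p, ‖u p‖ ^ 2)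
    (horth : ∀ m ∈ s, ∀ j < K,
      ∫ p, modeTest b (waveNumber R₂ m) j p * (gaugePhase (-b) p * u p) = 0) : u = 0 := by
  obtain ⟨husmooth, hucompact, husupp⟩ := hu
  by_contra hne
  set v : ℝ × ℝ → ℂ := fun p ↦ gaugePhase (-b) p * u p with hvdef
  have hv : ContDiff ℝ 1 v :=
    ((contDiff_gaugePhase (-b)).mul husmooth).of_le (by exact_mod_cast le_top)
  have hvc : HasCompactSupport v := hucompact.mul_left
  have hvsupp : tsupport v ⊆ rectR R₁ R₂ := tsupport_mul_subset_right.trans husupp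
  have hgauge : u = fun p ↦ gaugePhase b p * v p := by
    funext p
    rw [hvdef, ← mul_assoc, gaugePhase_mul_gaugePhase_neg, one_mul]
  have henergy : lam * ∫ p, ‖v p‖ ^ 2 ≤ landauEnergy b v :=
    mul_integral_sq_norm_le_landauEnergy hR₂ hv hvc
      (fun p hp ↦ Set.Ioo_subset_Ioc_self (hvsupp hp).2) fun m ↦ by
        by_cases hm : m ∈ s
        · exact low_mode_energy_le hb hK hv hvc (horth m hm)
        · exact high_mode_energy_le hv hvc fun p hp ↦
            le_add_mul_sq_of_le_abs hb (hs m hm) (hvsupp (subset_tsupport v hp)).1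
  refine (hlt hne).not_ge ?_
  rw [hgauge, qb_gaugePhase_mul b (hv.differentiable one_ne_zero)]
  simpa only [norm_mul, norm_gaugePhase, one_mul] using henergy

theorem finrank_le_card_mul {R₁ R₂ : ℝ} (hb : 0 < b) (hR₂ : 0 < R₂) {K : ℕ}
    (hK : lam ≤ (2 * K + 1) * b) {s : Finset ℤ}
    (hs : ∀ m ∉ s, b * R₁ / 2 + √lam ≤ |waveNumber R₂ m|) {V : Submodule ℂ (ℝ × ℝ → ℂ)}
    (hV : (V : Set (ℝ × ℝ → ℂ)) ⊆ {u | IsTestOn (rectR R₁ R₂) u})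
    (hlt : ∀ u ∈ V, u ≠ 0 → qb b u < lam * ∫ p, ‖u p‖ ^ 2) :
    Module.finrank ℂ V ≤ s.card * K := by
  have hcard : Fintype.card (s × Fin K) = s.card * K := by simp
  rw [← hcard]
  refine finrank_le_card_of_integral_eq_zero (μ := volume) V
    (fun i p ↦ modeTest b (waveNumber R₂ i.1) i.2 p * gaugePhase (-b) p) (fun u hu i ↦ ?_)
    fun u hu horth ↦ eq_zero_of_orthogonal_modeTest hb hR₂ hK hs (hV hu) (hlt u hu) ?_
  · have := continuous_modeTest b (waveNumber R₂ i.1) i.2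
    have := (contDiff_gaugePhase (-b)).continuous
    have := (hV hu).1.continuous
    exact Continuous.integrable_of_hasCompactSupport (by fun_prop) (hV hu).2.1.mul_left
  · simp_rw [← mul_assoc]
    exact fun m hm j hj ↦ horth (⟨m, hm⟩, ⟨j, hj⟩)

end UpperBound

/-! ### Subspaces on which a form of small trace is small -/

section SmallTrace

variable {𝕜 E F ι : Type*} [RCLike 𝕜] [NormedAddCommGroup E] [InnerProductSpace 𝕜 E]
  [NormedAddCommGroup F] [InnerProductSpace 𝕜 F]

theorem card_filter_lt_mul_le_sum [Fintype ι] {w : ι → ℝ} (hw : ∀ i, 0 ≤ w i) (ε : ℝ) :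
    ({i | ε < w i} : Finset ι).card * ε ≤ ∑ i, w i :=
  calc ({i | ε < w i} : Finset ι).card * ε
      ≤ ∑ i with ε < w i, w i := by
        rw [← nsmul_eq_mul]
        exact Finset.card_nsmul_le_sum _ _ _ fun i hi ↦ (Finset.mem_filter.1 hi).2.le
    _ ≤ ∑ i, w i := Finset.sum_le_univ_sum_of_nonneg hw

variable [FiniteDimensional 𝕜 E]

theorem re_inner_apply_self_eq_sum_eigenvalues {T : E →ₗ[𝕜] E} (hT : T.IsSymmetric) {n : ℕ}
    (hn : Module.finrank 𝕜 E = n) (x : E) :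
    RCLike.re ⟪T x, x⟫_𝕜 = ∑ i, hT.eigenvalues hn i * ‖⟪hT.eigenvectorBasis hn i, x⟫_𝕜‖ ^ 2 := by
  rw [← (hT.eigenvectorBasis hn).sum_inner_mul_inner, map_sum]
  refine Finset.sum_congr rfl fun i _ ↦ ?_
  rw [hT, hT.apply_eigenvectorBasis, inner_smul_right, ← inner_conj_symm x, mul_assoc,
    RCLike.conj_mul, ← RCLike.ofReal_pow, RCLike.re_ofReal_mul, RCLike.ofReal_re]

theorem exists_submodule_re_inner_le {T : E →ₗ[𝕜] E} (hT : T.IsPositive) {ε : ℝ} (hε : 0 < ε) :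
    ∃ W : Submodule 𝕜 E,
      Module.finrank 𝕜 E - RCLike.re (LinearMap.trace 𝕜 E T) / ε ≤ Module.finrank 𝕜 W ∧
      ∀ x ∈ W, RCLike.re ⟪T x, x⟫_𝕜 ≤ ε * ‖x‖ ^ 2 := by
  classical
  set w := hT.isSymmetric.eigenvalues rfl
  set e := hT.isSymmetric.eigenvectorBasis rfl
  set s : Finset (Fin (Module.finrank 𝕜 E)) := {i | ε < w i}
  refine ⟨(Submodule.span 𝕜 (s.image e : Set E))ᗮ, ?_, fun x hx ↦ ?_⟩
  · have markov : (s.card : ℝ) ≤ RCLike.re (LinearMap.trace 𝕜 E T) / ε := by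
      rw [le_div_iff₀ hε, hT.isSymmetric.re_trace_eq_sum_eigenvalues rfl]
      exact card_filter_lt_mul_le_sum (hT.nonneg_eigenvalues rfl) ε
    have finrank_span : Module.finrank 𝕜 (Submodule.span 𝕜 (s.image e : Set E)) ≤ s.card :=
      (finrank_span_finset_le_card _).trans Finset.card_image_le
    have finrank_add := (Submodule.span 𝕜 (s.image e : Set E)).finrank_add_finrank_orthogonal
    have : (Module.finrank 𝕜 E : ℝ) ≤
        s.card + Module.finrank 𝕜 (Submodule.span 𝕜 (s.image e : Set E))ᗮ := by
      exact_mod_cast finrank_add.symm.le.trans (Nat.add_le_add_right finrank_span _)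
    linarith
  · rw [re_inner_apply_self_eq_sum_eigenvalues hT.isSymmetric rfl, ← e.sum_sq_norm_inner_right,
      Finset.mul_sum]
    refine Finset.sum_le_sum fun i _ ↦ ?_
    by_cases hi : ε < w i
    · have : ⟪e i, x⟫_𝕜 = 0 := hx _ <| Submodule.subset_span <| by
        simpa using ⟨i, by simpa [s] using hi, rfl⟩
      simp [e, this]
    · gcongr
      exact not_lt.1 hi

theorem exists_submodule_norm_apply_sq_le [CompleteSpace F] [Fintype ι]
    (e : OrthonormalBasis ι 𝕜 E) (A : E →ₗ[𝕜] F) {ε : ℝ} (hε : 0 < ε) :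
    ∃ W : Submodule 𝕜 E, Module.finrank 𝕜 E - (∑ i, ‖A (e i)‖ ^ 2) / ε ≤ Module.finrank 𝕜 W ∧
      ∀ x ∈ W, ‖A x‖ ^ 2 ≤ ε * ‖x‖ ^ 2 := by
  have := FiniteDimensional.complete 𝕜 E
  set B : E →L[𝕜] F := A.toContinuousLinearMap
  have hB : (B.adjoint ∘L B).IsPositive := B.isPositive_adjoint_comp_self
  have inner_eq (x : E) : ⟪(B.adjoint ∘L B) x, x⟫_𝕜 = ((‖A x‖ ^ 2 : ℝ) : 𝕜) := by
    simp [ContinuousLinearMap.adjoint_inner_left, B]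
  obtain ⟨W, hW, hle⟩ := exists_submodule_re_inner_le hB.toLinearMap hε
  refine ⟨W, ?_, fun x hx ↦ ?_⟩
  · have trace_eq : RCLike.re (LinearMap.trace 𝕜 E (B.adjoint ∘L B)) = ∑ i, ‖A (e i)‖ ^ 2 := by
      rw [LinearMap.trace_eq_sum_inner _ e, map_sum]
      refine Finset.sum_congr rfl fun i _ ↦ ?_
      rw [← inner_conj_symm, RCLike.conj_re]
      exact (congrArg RCLike.re (inner_eq (e i))).trans (RCLike.ofReal_re _)
    rwa [trace_eq] at hW
  · have := hle x hx
    rwa [ContinuousLinearMap.coe_coe, inner_eq, RCLike.ofReal_re] at this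

theorem norm_sq_eq_integral_norm_sq {α : Type*} [MeasurableSpace α] {μ : Measure α}
    (g : Lp 𝕜 2 μ) : ‖g‖ ^ 2 = ∫ a, ‖g a‖ ^ 2 ∂μ := by
  rw [← inner_self_eq_norm_sq (𝕜 := 𝕜), L2.inner_def, ← integral_re (L2.integrable_inner g g)]
  simp_rw [inner_self_eq_norm_sq]

theorem exists_submodule_integral_sq_norm_sum_le {α : Type*} [MeasurableSpace α] {μ : Measure α}
    [Fintype ι] {f : ι → α → 𝕜} (hf : ∀ i, MemLp (f i) 2 μ) {ε : ℝ} (hε : 0 < ε) :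
    ∃ W : Submodule 𝕜 (EuclideanSpace 𝕜 ι),
      Fintype.card ι - (∑ i, ∫ a, ‖f i a‖ ^ 2 ∂μ) / ε ≤ Module.finrank 𝕜 W ∧
      ∀ c ∈ W, ∫ a, ‖∑ i, c i * f i a‖ ^ 2 ∂μ ≤ ε * ∑ i, ‖c i‖ ^ 2 := by
  classical
  set e := EuclideanSpace.basisFun ι 𝕜
  set A := e.toBasis.constr 𝕜 fun i ↦ (hf i).toLp (f i)
  have ae_eq (c : EuclideanSpace 𝕜 ι) : A c =ᵐ[μ] fun a ↦ ∑ i, c i * f i a := by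
    have hA : A c = ∑ i, c i • (hf i).toLp (f i) := by
      simp [A, e, Module.Basis.constr_apply_fintype]
    rw [hA]
    filter_upwards [Lp.coeFn_fun_finsetSum Finset.univ fun i ↦ c i • (hf i).toLp (f i),
      ae_all_iff.2 fun i ↦ Lp.coeFn_smul (c i) ((hf i).toLp (f i)),
      ae_all_iff.2 fun i ↦ (hf i).coeFn_toLp] with a hsum hsmul htoLp
    rw [hsum]
    exact Finset.sum_congr rfl fun i _ ↦ by rw [hsmul, Pi.smul_apply, htoLp, smul_eq_mul]
  have norm_sq (c : EuclideanSpace 𝕜 ι) : ‖A c‖ ^ 2 = ∫ a, ‖∑ i, c i * f i a‖ ^ 2 ∂μ := by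
    rw [norm_sq_eq_integral_norm_sq]
    exact integral_congr_ae <| (ae_eq c).mono fun a ha ↦ by simp only [ha]
  obtain ⟨W, hW, hle⟩ := exists_submodule_norm_apply_sq_le e A hε
  refine ⟨W, ?_, fun c hc ↦ ?_⟩
  · simpa [norm_sq, e] using hW
  · simpa only [norm_sq, EuclideanSpace.norm_sq_eq] using hle c hc

end SmallTrace

section Gram

variable {𝕜 ι α : Type*} [RCLike 𝕜] [Fintype ι] [MeasurableSpace α] {μ : Measure α}
  {f : ι → α → 𝕜}

open scoped ComplexConjugate

theorem integrable_conj_mul {f g : α → 𝕜} (hf : MemLp f 2 μ) (hg : MemLp g 2 μ) :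
    Integrable (fun a ↦ conj (f a) * g a) μ :=
  hf.star.integrable_mul hg

theorem integral_sq_norm_sum (hf : ∀ i, MemLp (f i) 2 μ) (c : ι → 𝕜) :
    ((∫ a, ‖∑ i, c i * f i a‖ ^ 2 ∂μ : ℝ) : 𝕜) =
      ∑ i, ∑ j, conj (c i) * c j * ∫ a, conj (f i a) * f j a ∂μ := by
  have expand (a : α) : ((‖∑ i, c i * f i a‖ ^ 2 : ℝ) : 𝕜) =
      ∑ i, ∑ j, conj (c i) * c j * (conj (f i a) * f j a) := by
    rw [RCLike.ofReal_pow, ← RCLike.conj_mul, map_sum, Finset.sum_mul_sum]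
    refine Finset.sum_congr rfl fun i _ ↦ Finset.sum_congr rfl fun j _ ↦ ?_
    rw [map_mul]
    ring
  have integrable (i j : ι) : Integrable (fun a ↦ conj (c i) * c j * (conj (f i a) * f j a)) μ :=
    (integrable_conj_mul (hf i) (hf j)).const_mul _
  rw [← integral_ofReal]
  simp_rw [expand]
  rw [integral_finsetSum _ fun i _ ↦ integrable_finsetSum _ fun j _ ↦ integrable i j]
  refine Finset.sum_congr rfl fun i _ ↦ ?_
  rw [integral_finsetSum _ fun j _ ↦ integrable i j]
  exact Finset.sum_congr rfl fun j _ ↦ integral_const_mul _ _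

variable [DecidableEq ι]

theorem sum_sum_conj_mul_mul_diagonal (c : ι → 𝕜) (d : ι → ℝ) :
    ∑ i, ∑ j, conj (c i) * c j * ((if i = j then d i else 0 : ℝ) : 𝕜) =
      ((∑ i, d i * ‖c i‖ ^ 2 : ℝ) : 𝕜) := by
  push_cast
  refine Finset.sum_congr rfl fun i _ ↦ ?_
  rw [Finset.sum_eq_single_of_mem i (Finset.mem_univ i) fun j _ hj ↦ by simp [hj.symm], if_pos rfl,
    RCLike.conj_mul, mul_comm]

theorem integral_sq_norm_sum_of_orthonormal (hf : ∀ i, MemLp (f i) 2 μ)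
    (hd : ∀ i j, ∫ a, conj (f i a) * f j a ∂μ = ((if i = j then 1 else 0 : ℝ) : 𝕜)) (c : ι → 𝕜) :
    ∫ a, ‖∑ i, c i * f i a‖ ^ 2 ∂μ = ∑ i, ‖c i‖ ^ 2 := by
  have := sum_sum_conj_mul_mul_diagonal c fun _ ↦ 1
  simp_rw [← hd, ← integral_sq_norm_sum hf, one_mul] at this
  exact_mod_cast this

theorem integral_sq_norm_sum_add_integral_sq_norm_sum {g : ι → α → 𝕜} {d : ι → ℝ}
    (hf : ∀ i, MemLp (f i) 2 μ) (hg : ∀ i, MemLp (g i) 2 μ)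
    (hd : ∀ i j, ∫ a, conj (f i a) * f j a ∂μ + ∫ a, conj (g i a) * g j a ∂μ =
      ((if i = j then d i else 0 : ℝ) : 𝕜)) (c : ι → 𝕜) :
    ∫ a, ‖∑ i, c i * f i a‖ ^ 2 ∂μ + ∫ a, ‖∑ i, c i * g i a‖ ^ 2 ∂μ = ∑ i, d i * ‖c i‖ ^ 2 := by
  have := sum_sum_conj_mul_mul_diagonal c d
  simp_rw [← hd, mul_add, Finset.sum_add_distrib, ← integral_sq_norm_sum hf,
    ← integral_sq_norm_sum hg] at this
  exact_mod_cast this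

end Gram

/-! ### Landau waves on a strip -/

section LandauWave

open scoped ComplexConjugate

/-- Lebesgue measure on the strip `ℝ × (-L/2, L/2]`, on which the trial functions of the lower bound
are orthonormal. -/
def stripMeasure (L : ℝ) : Measure (ℝ × ℝ) :=
  (volume : Measure ℝ).prod (volume.restrict (Set.Ioc (-L / 2) (L / 2)))

/-- The normalized `m`-th Fourier mode on the strip of width `L`, with profile `f` centred at the
equilibrium point `-k/b` of the oscillator belonging to its wave number `k`. -/
def landauWave (b L : ℝ) (m : ℤ) (f : ℝ → ℝ) (p : ℝ × ℝ) : ℂ :=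
  ((√L)⁻¹ : ℝ) * planeWave (waveNumber L m) p.2 * (f (p.1 + waveNumber L m / b) : ℝ)

variable {b L : ℝ}

theorem integral_eq_integral_stripMeasure {G : ℝ × ℝ → ℝ}
    (hG : ∀ p : ℝ × ℝ, p.2 ∉ Set.Ioc (-L / 2) (L / 2) → G p = 0) :
    ∫ p, G p = ∫ p, G p ∂(stripMeasure L) := by
  have hstrip : stripMeasure L = volume.restrict (Set.univ ×ˢ Set.Ioc (-L / 2) (L / 2)) := by
    rw [stripMeasure, Measure.volume_eq_prod, ← Measure.prod_restrict, Measure.restrict_univ]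
  rw [hstrip]
  exact (setIntegral_eq_integral_of_forall_compl_eq_zero
    fun p hp ↦ hG p fun hp₂ ↦ hp (Set.mk_mem_prod (Set.mem_univ p.1) hp₂)).symm

theorem sq_norm_landauWave (hL : 0 < L) (m : ℤ) (f : ℝ → ℝ) (p : ℝ × ℝ) :
    ‖landauWave b L m f p‖ ^ 2 = f (p.1 + waveNumber L m / b) ^ 2 * L⁻¹ := by
  rw [landauWave, norm_mul, norm_mul, norm_planeWave, mul_one, mul_pow, Complex.norm_real,
    Complex.norm_real, norm_eq_abs, norm_eq_abs, sq_abs, sq_abs, inv_pow, sq_sqrt hL.le, mul_comm]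

theorem conj_planeWave_mul_planeWave (k l y : ℝ) :
    conj (planeWave k y) * planeWave l y = planeWave (l - k) y := by
  rw [planeWave, planeWave, planeWave, ← Complex.exp_conj, ← Complex.exp_add, map_mul,
    Complex.conj_ofReal, Complex.conj_I]
  congr 1
  push_cast
  ring

theorem planeWave_waveNumber_add_period (hL : L ≠ 0) (m : ℤ) (y : ℝ) :
    planeWave (waveNumber L m) (y + L) = planeWave (waveNumber L m) y := by
  rw [planeWave, planeWave, Complex.exp_eq_exp_iff_exists_int]
  refine ⟨m, ?_⟩
  have hLc : (L : ℂ) ≠ 0 := mod_cast hL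
  simp only [waveNumber]
  push_cast
  field_simp

theorem integral_planeWave_waveNumber (hL : 0 < L) (m : ℤ) :
    ∫ y in Set.Ioc (-L / 2) (L / 2), planeWave (waveNumber L m) y =
      if m = 0 then (L : ℂ) else 0 := by
  rw [← intervalIntegral.integral_of_le (by linarith)]
  split_ifs with hm
  · simp [hm, planeWave, waveNumber, ← sub_div]
  · set k := waveNumber L m
    have hk : (k : ℂ) * Complex.I ≠ 0 := by
      simp [k, waveNumber, hm, hL.ne', pi_ne_zero]
    have hint := intervalIntegral.integral_eq_sub_of_hasDerivAt (a := -L / 2) (b := L / 2)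
      (fun y _ ↦ hasDerivAt_planeWave k y) (Continuous.intervalIntegrable (by fun_prop) _ _)
    rw [(by ring : L / 2 = -L / 2 + L), planeWave_waveNumber_add_period hL.ne', sub_self,
      intervalIntegral.integral_const_mul] at hint
    rw [(by ring : L / 2 = -L / 2 + L)]
    exact (mul_eq_zero.1 hint).resolve_left hk

theorem conj_landauWave_mul_landauWave (hL : 0 < L) (m n : ℤ) (f g : ℝ → ℝ) (p : ℝ × ℝ) :
    conj (landauWave b L m f p) * landauWave b L n g p =
      ((f (p.1 + waveNumber L m / b) * g (p.1 + waveNumber L n / b) : ℝ) : ℂ) *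
        ((L⁻¹ : ℝ) * planeWave (waveNumber L (n - m)) p.2) := by
  have hsub : waveNumber L (n - m) = waveNumber L n - waveNumber L m := by
    simp only [waveNumber, Int.cast_sub]
    ring
  have hinv : ((L⁻¹ : ℝ) : ℂ) = ((√L)⁻¹ : ℝ) * ((√L)⁻¹ : ℝ) := by
    rw [← Complex.ofReal_mul, ← mul_inv, mul_self_sqrt hL.le]
  rw [hsub, ← conj_planeWave_mul_planeWave, hinv, landauWave, landauWave, map_mul, map_mul,
    Complex.conj_ofReal, Complex.conj_ofReal, Complex.ofReal_mul]
  ring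

theorem integral_conj_landauWave_mul_landauWave (hL : 0 < L) (m n : ℤ) (f g : ℝ → ℝ) :
    ∫ p, conj (landauWave b L m f p) * landauWave b L n g p ∂(stripMeasure L) =
      ((if m = n then ∫ x, f x * g x else 0 : ℝ) : ℂ) := by
  simp_rw [conj_landauWave_mul_landauWave hL, stripMeasure]
  rw [integral_prod_mul (fun x : ℝ ↦
      ((f (x + waveNumber L m / b) * g (x + waveNumber L n / b) : ℝ) : ℂ))
    (fun y : ℝ ↦ ((L⁻¹ : ℝ) : ℂ) * planeWave (waveNumber L (n - m)) y), integral_const_mul,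
    integral_planeWave_waveNumber hL]
  by_cases hmn : m = n
  · subst hmn
    rw [sub_self, if_pos rfl, if_pos rfl, integral_complex_ofReal,
      integral_add_right_eq_self fun x ↦ f x * g x, ← Complex.ofReal_mul, inv_mul_cancel₀ hL.ne',
      Complex.ofReal_one, mul_one]
  · rw [if_neg (sub_ne_zero.2 (Ne.symm hmn)), if_neg hmn, mul_zero, mul_zero, Complex.ofReal_zero]

theorem memLp_landauWave {f : ℝ → ℝ} (hf : MemLp f 2) (b L : ℝ) (m : ℤ) :
    MemLp (landauWave b L m f) 2 (stripMeasure L) := by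
  have hshift : MemLp (fun p : ℝ × ℝ ↦ f (p.1 + waveNumber L m / b)) 2 (stripMeasure L) :=
    (hf.comp_measurePreserving (measurePreserving_add_right volume _)).comp_fst _
  have hmeas := Complex.continuous_ofReal.comp_aestronglyMeasurable hshift.1
  refine hshift.of_le_mul (c := |(√L)⁻¹|)
    ((Continuous.aestronglyMeasurable (by fun_prop)).mul hmeas) (ae_of_all _ fun p ↦ le_of_eq ?_)
  rw [landauWave, norm_mul, norm_mul, norm_planeWave, mul_one, Complex.norm_real,
    Complex.norm_real, norm_eq_abs]

theorem contDiff_landauWave {f : ℝ → ℝ} (hf : ContDiff ℝ ∞ f) (b L : ℝ) (m : ℤ) :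
    ContDiff ℝ ∞ (landauWave b L m f) :=
  (contDiff_const.mul ((contDiff_planeWave _).comp contDiff_snd)).mul
    (Complex.ofRealCLM.contDiff.comp (hf.comp (contDiff_fst.add contDiff_const)))

theorem dX_landauWave {f : ℝ → ℝ} (hf : ContDiff ℝ ∞ f) (b L : ℝ) (m : ℤ) :
    dX (landauWave b L m f) = landauWave b L m (deriv f) := by
  ext p
  refine (hasDerivAt_dX
    ((contDiff_landauWave hf b L m).differentiable (by simp) p)).unique ?_
  have hderiv := (hf.differentiable (by simp) (p.1 + waveNumber L m / b)).hasDerivAt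
  exact (hderiv.comp_add_const p.1 _).ofReal_comp.const_mul
    (((√L)⁻¹ : ℝ) * planeWave (waveNumber L m) p.2)

theorem dY_landauWave {f : ℝ → ℝ} (hf : ContDiff ℝ ∞ f) (b L : ℝ) (m : ℤ) (p : ℝ × ℝ) :
    dY (landauWave b L m f) p = waveNumber L m * Complex.I * landauWave b L m f p := by
  refine (hasDerivAt_dY
    ((contDiff_landauWave hf b L m).differentiable (by simp) p)).unique ?_
  refine (((hasDerivAt_planeWave (waveNumber L m) p.2).const_mul (((√L)⁻¹ : ℝ) : ℂ)).mul_const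
    ((f (p.1 + waveNumber L m / b) : ℝ) : ℂ)).congr_deriv ?_
  rw [landauWave]
  ring

theorem landauMomentum_landauWave (hb : b ≠ 0) {f : ℝ → ℝ} (hf : ContDiff ℝ ∞ f) (L : ℝ) (m : ℤ) :
    landauMomentum b (landauWave b L m f) = landauWave b L m fun x ↦ b * x * f x := by
  ext p
  have hbc : (b : ℂ) ≠ 0 := mod_cast hb
  rw [landauMomentum, dY_landauWave hf, landauWave, landauWave]
  push_cast
  field_simp
  rw [Complex.I_sq]
  ring

end LandauWave

section LandauSum

variable {b L : ℝ} {s : Finset ℤ} {K : ℕ} {f : ℕ → ℝ → ℝ}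

/-- The superposition with coefficients `c` of the Landau waves with modes in `s` and with the first
`K` profiles of the family `f`. -/
def landauSum (b L : ℝ) (f : ℕ → ℝ → ℝ) (c : s × Fin K → ℂ) (p : ℝ × ℝ) : ℂ :=
  ∑ i, c i * landauWave b L i.1 (f i.2) p

theorem memLp_landauSum (hf : ∀ n, MemLp (f n) 2) (b L : ℝ) (c : s × Fin K → ℂ) :
    MemLp (landauSum b L f c) 2 (stripMeasure L) :=
  memLp_finsetSum _ fun _ _ ↦ (memLp_landauWave (hf _) b L _).const_mul _

theorem contDiff_landauSum (hf : ∀ n, ContDiff ℝ ∞ (f n)) (b L : ℝ) (c : s × Fin K → ℂ) :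
    ContDiff ℝ ∞ (landauSum b L f c) :=
  ContDiff.sum fun _ _ ↦ contDiff_const.mul (contDiff_landauWave (hf _) b L _)

theorem fderiv_landauSum (hf : ∀ n, ContDiff ℝ ∞ (f n)) (b L : ℝ) (c : s × Fin K → ℂ)
    (p w : ℝ × ℝ) :
    fderiv ℝ (landauSum b L f c) p w = ∑ i, c i * fderiv ℝ (landauWave b L i.1 (f i.2)) p w := by
  have hd (i : s × Fin K) : DifferentiableAt ℝ (landauWave b L i.1 (f i.2)) p :=
    (contDiff_landauWave (hf _) b L _).differentiable (by simp) p
  unfold landauSum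
  rw [fderiv_fun_sum fun i _ ↦ (hd i).const_mul _, sum_apply]
  exact Finset.sum_congr rfl fun i _ ↦ by rw [fderiv_const_mul (hd i), smul_apply, smul_eq_mul]

theorem dX_landauSum (hf : ∀ n, ContDiff ℝ ∞ (f n)) (b L : ℝ) (c : s × Fin K → ℂ) :
    dX (landauSum b L f c) = landauSum b L (fun n ↦ deriv (f n)) c := by
  ext p
  simp only [dX, fderiv_landauSum hf]
  exact Finset.sum_congr rfl fun i _ ↦ congrArg _ (congrFun (dX_landauWave (hf _) b L _) p)

theorem landauMomentum_landauSum (hb : b ≠ 0) (hf : ∀ n, ContDiff ℝ ∞ (f n)) (L : ℝ)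
    (c : s × Fin K → ℂ) :
    landauMomentum b (landauSum b L f c) = landauSum b L (fun n x ↦ b * x * f n x) c := by
  ext p
  simp only [landauMomentum, dY, fderiv_landauSum hf, landauSum, Finset.mul_sum,
    ← Finset.sum_add_distrib]
  refine Finset.sum_congr rfl fun i _ ↦ ?_
  rw [← landauMomentum_landauWave hb (hf _), landauMomentum, dY]
  ring

theorem integral_sq_norm_landauSum_oscillatorFun (hb : 0 < b) (hL : 0 < L) (c : s × Fin K → ℂ) :
    ∫ p, ‖landauSum b L (oscillatorFun b) c p‖ ^ 2 ∂(stripMeasure L) = ∑ i, ‖c i‖ ^ 2 := by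
  unfold landauSum
  refine integral_sq_norm_sum_of_orthonormal (𝕜 := ℂ)
    (fun i ↦ memLp_landauWave (memLp_oscillatorFun hb _) b L _) (fun i j ↦ ?_) c
  rw [integral_conj_landauWave_mul_landauWave hL, integral_oscillatorFun_mul_oscillatorFun hb,
    ← ite_and]
  simp only [Prod.ext_iff, Subtype.ext_iff, Fin.ext_iff]
  rfl

theorem integral_energy_landauSum_oscillatorFun (hb : 0 < b) (hL : 0 < L) (c : s × Fin K → ℂ) :
    ∫ p, ‖dX (landauSum b L (oscillatorFun b) c) p‖ ^ 2 ∂(stripMeasure L) +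
      ∫ p, ‖landauMomentum b (landauSum b L (oscillatorFun b) c) p‖ ^ 2 ∂(stripMeasure L) =
      ∑ i, ((2 * (i.2 : ℕ) + 1) * b) * ‖c i‖ ^ 2 := by
  rw [dX_landauSum (fun _ ↦ contDiff_oscillatorFun _),
    landauMomentum_landauSum hb.ne' (fun _ ↦ contDiff_oscillatorFun _)]
  unfold landauSum
  refine integral_sq_norm_sum_add_integral_sq_norm_sum (𝕜 := ℂ)
    (fun i ↦ memLp_landauWave (memLp_deriv_oscillatorFun hb _) b L _)
    (fun i ↦ memLp_landauWave (memLp_mul_oscillatorFun hb b _) b L _) (fun i j ↦ ?_) c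
  rw [integral_conj_landauWave_mul_landauWave hL, integral_conj_landauWave_mul_landauWave hL]
  have henergy := integral_oscillatorFun_energy hb i.2 j.2
  rw [← Complex.ofReal_add]
  by_cases hmode : (i.1 : ℤ) = j.1
  · rw [if_pos hmode, if_pos hmode, henergy]
    by_cases hij : i = j
    · simp [hij]
    · have hlevel : (i.2 : ℕ) ≠ j.2 := fun h ↦ hij (Prod.ext (Subtype.ext hmode) (Fin.ext h))
      simp [hij, hlevel]
  · have hij : i ≠ j := fun h ↦ hmode (by rw [h])
    simp [hmode, hij]

end LandauSum

/-! ### Cutting off -/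

section Cutoff

variable {b R B : ℝ} {χ v : ℝ × ℝ → ℂ} {p : ℝ × ℝ}

theorem sq_norm_add_le {E : Type*} [SeminormedAddCommGroup E] {ε : ℝ} (hε : 0 < ε) (x y : E) :
    ‖x + y‖ ^ 2 ≤ (1 + ε) * ‖x‖ ^ 2 + (1 + ε⁻¹) * ‖y‖ ^ 2 := by
  have young : 2 * ‖x‖ * ‖y‖ ≤ ε * ‖x‖ ^ 2 + ε⁻¹ * ‖y‖ ^ 2 := by
    have hsq : 0 ≤ ε⁻¹ * (ε * ‖x‖ - ‖y‖) ^ 2 := by positivity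
    have hexpand : ε⁻¹ * (ε * ‖x‖ - ‖y‖) ^ 2 = ε * ‖x‖ ^ 2 + ε⁻¹ * ‖y‖ ^ 2 - 2 * ‖x‖ * ‖y‖ := by
      field_simp
      ring
    linarith
  calc ‖x + y‖ ^ 2 ≤ (‖x‖ + ‖y‖) ^ 2 := by
        gcongr
        exact norm_add_le x y
    _ ≤ (1 + ε) * ‖x‖ ^ 2 + (1 + ε⁻¹) * ‖y‖ ^ 2 := by linarith

theorem fderiv_mul_apply (hχ : DifferentiableAt ℝ χ p) (hv : DifferentiableAt ℝ v p) (w : ℝ × ℝ) :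
    fderiv ℝ (fun q ↦ χ q * v q) p w = χ p * fderiv ℝ v p w + fderiv ℝ χ p w * v p := by
  rw [fderiv_fun_mul hχ hv]
  simp [mul_comm]

theorem sq_norm_dX_mul_add_sq_norm_landauMomentum_mul_le (b : ℝ) (hχ : DifferentiableAt ℝ χ p)
    (hv : DifferentiableAt ℝ v p) (hχ₁ : ‖χ p‖ ≤ 1) (hX : ‖dX χ p‖ ≤ B) (hY : ‖dY χ p‖ ≤ B)
    {ε : ℝ} (hε : 0 < ε) :
    ‖dX (fun q ↦ χ q * v q) p‖ ^ 2 + ‖landauMomentum b (fun q ↦ χ q * v q) p‖ ^ 2 ≤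
      (1 + ε) * (‖dX v p‖ ^ 2 + ‖landauMomentum b v p‖ ^ 2) +
        (1 + ε⁻¹) * (2 * B ^ 2) * ‖v p‖ ^ 2 := by
  have bound {z w : ℂ} (hw : ‖w‖ ≤ B) :
      ‖χ p * z + w * v p‖ ^ 2 ≤ (1 + ε) * ‖z‖ ^ 2 + (1 + ε⁻¹) * B ^ 2 * ‖v p‖ ^ 2 :=
    calc ‖χ p * z + w * v p‖ ^ 2
        ≤ (1 + ε) * (‖χ p‖ * ‖z‖) ^ 2 + (1 + ε⁻¹) * (‖w‖ * ‖v p‖) ^ 2 := by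
          simpa only [norm_mul] using sq_norm_add_le hε (χ p * z) (w * v p)
      _ ≤ (1 + ε) * (1 * ‖z‖) ^ 2 + (1 + ε⁻¹) * (B * ‖v p‖) ^ 2 := by gcongr
      _ = (1 + ε) * ‖z‖ ^ 2 + (1 + ε⁻¹) * B ^ 2 * ‖v p‖ ^ 2 := by ring
  have hdX : dX (fun q ↦ χ q * v q) p = χ p * dX v p + dX χ p * v p := fderiv_mul_apply hχ hv _
  have hmomentum : landauMomentum b (fun q ↦ χ q * v q) p =
      χ p * landauMomentum b v p + -Complex.I * dY χ p * v p := by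
    simp only [landauMomentum, dY, fderiv_mul_apply hχ hv]
    ring
  have hdX_le := bound (z := dX v p) hX
  have hmomentum_le := bound (z := landauMomentum b v p) (w := -Complex.I * dY χ p)
    (by simpa using hY)
  rw [hdX, hmomentum]
  linarith

/-- A smooth cutoff to the square of side `R`: the product of two rescaled copies of `η`. -/
def squareCutoff (η : ContDiffBump (0 : ℝ)) (R : ℝ) (p : ℝ × ℝ) : ℝ := η (p.1 / R) * η (p.2 / R)

variable {η : ContDiffBump (0 : ℝ)}

theorem squareCutoff_nonneg (η : ContDiffBump (0 : ℝ)) (R : ℝ) (p : ℝ × ℝ) :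
    0 ≤ squareCutoff η R p :=
  mul_nonneg η.nonneg η.nonneg

theorem squareCutoff_le_one (η : ContDiffBump (0 : ℝ)) (R : ℝ) (p : ℝ × ℝ) :
    squareCutoff η R p ≤ 1 :=
  mul_le_one₀ η.le_one η.nonneg η.le_one

theorem one_sub_squareCutoff_sq_nonneg (η : ContDiffBump (0 : ℝ)) (R : ℝ) (p : ℝ × ℝ) :
    0 ≤ 1 - squareCutoff η R p ^ 2 :=
  sub_nonneg.2 (pow_le_one₀ (squareCutoff_nonneg η R p) (squareCutoff_le_one η R p))

theorem contDiff_squareCutoff (η : ContDiffBump (0 : ℝ)) (R : ℝ) :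
    ContDiff ℝ ∞ (squareCutoff η R) :=
  (η.contDiff.comp (contDiff_fst.div_const _)).mul (η.contDiff.comp (contDiff_snd.div_const _))

theorem contDiff_ofReal_squareCutoff (η : ContDiffBump (0 : ℝ)) (R : ℝ) :
    ContDiff ℝ ∞ fun p ↦ (squareCutoff η R p : ℂ) :=
  Complex.ofRealCLM.contDiff.comp (contDiff_squareCutoff η R)

theorem hasDerivAt_comp_div (η : ContDiffBump (0 : ℝ)) (R t : ℝ) :
    HasDerivAt (fun t ↦ η (t / R)) (deriv η (t / R) / R) t := by
  have hη : HasDerivAt η (deriv η (t / R)) (t / R) :=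
    (η.contDiff.differentiable (n := 1) one_ne_zero _).hasDerivAt
  exact (hη.comp t ((hasDerivAt_id t).div_const R)).congr_deriv (mul_one_div _ _)

theorem norm_dX_squareCutoff_le (hR : 0 < R) (hB : ∀ t, |deriv η t| ≤ B) (p : ℝ × ℝ) :
    ‖dX (fun q ↦ (squareCutoff η R q : ℂ)) p‖ ≤ B / R := by
  have hdX := (hasDerivAt_dX ((contDiff_ofReal_squareCutoff η R).differentiable (by simp) p)).unique
    ((hasDerivAt_comp_div η R p.1).mul_const (η (p.2 / R))).ofReal_comp
  rw [hdX, Complex.norm_real, norm_eq_abs, abs_mul, abs_div, abs_of_pos hR,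
    abs_of_nonneg η.nonneg]
  exact (mul_le_of_le_one_right (by positivity) η.le_one).trans (by gcongr; exact hB _)

theorem norm_dY_squareCutoff_le (hR : 0 < R) (hB : ∀ t, |deriv η t| ≤ B) (p : ℝ × ℝ) :
    ‖dY (fun q ↦ (squareCutoff η R q : ℂ)) p‖ ≤ B / R := by
  have hdY := (hasDerivAt_dY ((contDiff_ofReal_squareCutoff η R).differentiable (by simp) p)).unique
    ((hasDerivAt_comp_div η R p.2).const_mul (η (p.1 / R))).ofReal_comp
  rw [hdY, Complex.norm_real, norm_eq_abs, abs_mul, abs_div, abs_of_pos hR,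
    abs_of_nonneg η.nonneg]
  exact (mul_le_of_le_one_left (by positivity) η.le_one).trans (by gcongr; exact hB _)

theorem tsupport_squareCutoff_mul_subset (hR : 0 < R) (v : ℝ × ℝ → ℂ) :
    tsupport (fun p ↦ squareCutoff η R p * v p) ⊆
      Set.Icc (-(η.rOut * R)) (η.rOut * R) ×ˢ Set.Icc (-(η.rOut * R)) (η.rOut * R) := by
  refine closure_minimal (fun p hp ↦ ?_) (isClosed_Icc.prod isClosed_Icc)
  have hmem {t : ℝ} (ht : η (t / R) ≠ 0) : t ∈ Set.Icc (-(η.rOut * R)) (η.rOut * R) := by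
    have hlt : |t / R| < η.rOut := by
      by_contra! hle
      exact ht (η.zero_of_le_dist (by rwa [dist_zero_right]))
    rw [abs_div, abs_of_pos hR, div_lt_iff₀ hR] at hlt
    exact abs_le.1 hlt.le
  have hne : squareCutoff η R p ≠ 0 := fun h ↦ hp (by simp [h])
  exact ⟨hmem (left_ne_zero_of_mul hne), hmem (right_ne_zero_of_mul hne)⟩

theorem isTestOn_gaugePhase_mul {Ω : Set (ℝ × ℝ)} (b : ℝ) (hv : IsTestOn Ω v) :
    IsTestOn Ω fun p ↦ gaugePhase b p * v p :=
  ⟨(contDiff_gaugePhase b).mul hv.1, hv.2.1.mul_left, (tsupport_mul_subset_right).trans hv.2.2⟩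

theorem isTestOn_squareCutoff_mul (hη : η.rOut < 1 / 2) (hR : 0 < R) (hv : ContDiff ℝ ∞ v) :
    IsTestOn (rectR R R) fun p ↦ squareCutoff η R p * v p := by
  have hsub := tsupport_squareCutoff_mul_subset (η := η) hR v
  refine ⟨(contDiff_ofReal_squareCutoff η R).mul hv,
    (isCompact_Icc.prod isCompact_Icc).of_isClosed_subset (isClosed_tsupport _) hsub,
    hsub.trans (Set.prod_mono ?_ ?_)⟩ <;>
  exact Set.Icc_subset_Ioo (by nlinarith) (by nlinarith)

theorem landauEnergy_squareCutoff_mul_le (b : ℝ) (hη : η.rOut < 1 / 2)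
    (hB : ∀ t, |deriv η t| ≤ B) (hR : 0 < R) {ε : ℝ} (hε : 0 < ε) (hv : ContDiff ℝ ∞ v)
    (hv₂ : MemLp v 2 (stripMeasure R)) (hX : MemLp (dX v) 2 (stripMeasure R))
    (hP : MemLp (landauMomentum b v) 2 (stripMeasure R)) :
    landauEnergy b (fun p ↦ squareCutoff η R p * v p) ≤
      (1 + ε) * (∫ p, ‖dX v p‖ ^ 2 ∂(stripMeasure R) +
        ∫ p, ‖landauMomentum b v p‖ ^ 2 ∂(stripMeasure R)) +
      (1 + ε⁻¹) * (2 * (B / R) ^ 2) * ∫ p, ‖v p‖ ^ 2 ∂(stripMeasure R) := by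
  have htest := isTestOn_squareCutoff_mul hη hR hv
  rw [landauEnergy, integral_eq_integral_stripMeasure (L := R)]
  · have hXP : Integrable (fun p ↦ ‖dX v p‖ ^ 2 + ‖landauMomentum b v p‖ ^ 2) (stripMeasure R) :=
      (hX.integrable_norm_pow two_ne_zero).add (hP.integrable_norm_pow two_ne_zero)
    have hmass := hv₂.integrable_norm_pow two_ne_zero
    rw [← integral_add (hX.integrable_norm_pow two_ne_zero) (hP.integrable_norm_pow two_ne_zero),
      ← integral_const_mul, ← integral_const_mul,
      ← integral_add (hXP.const_mul _) (hmass.const_mul _)]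
    refine integral_mono_of_nonneg (ae_of_all _ fun p ↦ by positivity)
      ((hXP.const_mul _).add (hmass.const_mul _)) (ae_of_all _ fun p ↦ ?_)
    exact sq_norm_dX_mul_add_sq_norm_landauMomentum_mul_le b
      ((contDiff_ofReal_squareCutoff η R).differentiable (by simp) p)
      (hv.differentiable (by simp) p)
      (by simpa [abs_of_nonneg (squareCutoff_nonneg η R p)] using squareCutoff_le_one η R p)
      (norm_dX_squareCutoff_le hR hB p) (norm_dY_squareCutoff_le hR hB p) hε
  · intro p hp
    have hnot : p ∉ tsupport fun q ↦ (squareCutoff η R q : ℂ) * v q := fun h ↦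
      hp (Set.Ioo_subset_Ioc_self (htest.2.2 h).2)
    simp only [dX, landauMomentum, dY, fderiv_of_notMem_tsupport ℝ hnot,
      image_eq_zero_of_notMem_tsupport hnot]
    simp

end Cutoff

/-! ### Mass lost by the cutoff -/

section LostMass

variable {b R d : ℝ} {η : ContDiffBump (0 : ℝ)}

theorem one_sub_squareCutoff_sq_le {a : ℝ} (hR : 0 < R) (hd : 0 < d) (ha : |a| + d ≤ η.rIn * R)
    (p : ℝ × ℝ) :
    1 - squareCutoff η R p ^ 2 ≤
      (Set.Icc (-(η.rIn * R)) (η.rIn * R))ᶜ.indicator 1 p.2 + ((p.1 + a) / d) ^ 2 := by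
  have hle : 1 - squareCutoff η R p ^ 2 ≤ 1 := by linarith [sq_nonneg (squareCutoff η R p)]
  have hone {t : ℝ} (ht : |t| ≤ η.rIn * R) : η (t / R) = 1 := by
    refine η.one_of_mem_closedBall ?_
    rwa [mem_closedBall_zero_iff, Real.norm_eq_abs, abs_div, abs_of_pos hR, div_le_iff₀ hR]
  by_cases hy : p.2 ∈ Set.Icc (-(η.rIn * R)) (η.rIn * R)
  · rw [Set.indicator_of_notMem (Set.notMem_compl_iff.2 hy), zero_add]
    rcases le_or_gt |p.1| (η.rIn * R) with hx | hx
    · rw [squareCutoff, hone hx, hone (abs_le.2 hy)]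
      linarith [sq_nonneg ((p.1 + a) / d)]
    · have hfar : d ≤ |p.1 + a| := by linarith [abs_sub_abs_le_abs_add p.1 a]
      refine hle.trans ?_
      rwa [one_le_sq_iff_one_le_abs, abs_div, abs_of_pos hd, one_le_div hd]
  · rw [Set.indicator_of_mem (Set.mem_compl hy), Pi.one_apply]
    linarith [sq_nonneg ((p.1 + a) / d)]

theorem setIntegral_indicator_compl_Icc {r L : ℝ} (hr : 0 ≤ r) (hrL : r < L / 2) :
    ∫ y in Set.Ioc (-L / 2) (L / 2), (Set.Icc (-r) r)ᶜ.indicator (1 : ℝ → ℝ) y = L - 2 * r := by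
  have hsub : Set.Icc (-r) r ⊆ Set.Ioc (-L / 2) (L / 2) := fun y hy ↦
    ⟨by linarith [hy.1], by linarith [hy.2]⟩
  rw [setIntegral_indicator measurableSet_Icc.compl, ← Set.sdiff_eq]
  simp only [Pi.one_apply, setIntegral_const, smul_eq_mul, mul_one]
  rw [measureReal_sdiff hsub measurableSet_Icc measure_Ioc_lt_top.ne,
    Real.volume_real_Ioc_of_le (by linarith), Real.volume_real_Icc_of_le (by linarith)]
  ring

theorem integral_prod_stripMeasure (L a : ℝ) (f g : ℝ → ℝ) :
    ∫ p, f (p.1 + a) * g p.2 ∂(stripMeasure L) =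
      (∫ x, f x) * ∫ y in Set.Ioc (-L / 2) (L / 2), g y := by
  rw [stripMeasure, integral_prod_mul (fun x ↦ f (x + a)) g, integral_add_right_eq_self f]

theorem integral_one_sub_squareCutoff_sq_mul_le {f : ℝ → ℝ} (hf : MemLp f 2)
    (hxf : MemLp (fun x ↦ x * f x) 2) (hη : η.rIn < 1 / 2) (hR : 0 < R) (hd : 0 < d) {m : ℤ}
    (hm : |waveNumber R m / b| + d ≤ η.rIn * R) :
    ∫ p, (1 - squareCutoff η R p ^ 2) * ‖landauWave b R m f p‖ ^ 2 ∂(stripMeasure R) ≤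
      (1 - 2 * η.rIn) * (∫ x, f x ^ 2) + (∫ x, (x * f x) ^ 2) / d ^ 2 := by
  set a := waveNumber R m / b
  set edge : ℝ → ℝ := (Set.Icc (-(η.rIn * R)) (η.rIn * R))ᶜ.indicator 1
  have hedge : Integrable (fun p : ℝ × ℝ ↦ f (p.1 + a) ^ 2 * (R⁻¹ * edge p.2)) (stripMeasure R) :=
    (hf.integrable_sq.comp_add_right a).mul_prod
      (((integrable_const 1).indicator measurableSet_Icc.compl).const_mul _)
  have htail : Integrable (fun p : ℝ × ℝ ↦ ((p.1 + a) * f (p.1 + a)) ^ 2 * (R⁻¹ / d ^ 2))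
      (stripMeasure R) := (hxf.integrable_sq.comp_add_right a).mul_prod (integrable_const _)
  calc ∫ p, (1 - squareCutoff η R p ^ 2) * ‖landauWave b R m f p‖ ^ 2 ∂(stripMeasure R)
      ≤ ∫ p, f (p.1 + a) ^ 2 * (R⁻¹ * edge p.2) +
          ((p.1 + a) * f (p.1 + a)) ^ 2 * (R⁻¹ / d ^ 2) ∂(stripMeasure R) := by
        refine integral_mono_of_nonneg
          (ae_of_all _ fun p ↦ mul_nonneg (one_sub_squareCutoff_sq_nonneg η R p) (by positivity))
          (hedge.add htail) (ae_of_all _ fun p ↦ ?_)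
        calc (1 - squareCutoff η R p ^ 2) * ‖landauWave b R m f p‖ ^ 2
            ≤ (edge p.2 + ((p.1 + a) / d) ^ 2) * ‖landauWave b R m f p‖ ^ 2 := by
              gcongr
              exact one_sub_squareCutoff_sq_le hR hd hm p
          _ = _ := by
              rw [sq_norm_landauWave hR]
              ring
    _ = (1 - 2 * η.rIn) * (∫ x, f x ^ 2) + (∫ x, (x * f x) ^ 2) / d ^ 2 := by
        rw [integral_add hedge htail,
          integral_prod_stripMeasure R a (fun x ↦ f x ^ 2) fun y ↦ R⁻¹ * edge y,
          integral_prod_stripMeasure R a (fun x ↦ (x * f x) ^ 2) fun _ ↦ R⁻¹ / d ^ 2,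
          integral_const_mul, setIntegral_indicator_compl_Icc (by have := η.rIn_pos; positivity)
            (by nlinarith), setIntegral_const, Real.volume_real_Ioc_of_le (by linarith),
          smul_eq_mul]
        field_simp
        ring

/-- The Landau wave weighted by `√(1 - χ²)`, where `χ` is the square cutoff: its mass is the mass
that the wave loses when it is multiplied by `χ`. -/
def lostWave (η : ContDiffBump (0 : ℝ)) (b R : ℝ) (m : ℤ) (f : ℝ → ℝ) (p : ℝ × ℝ) : ℂ :=
  √(1 - squareCutoff η R p ^ 2) * landauWave b R m f p

theorem memLp_lostWave {f : ℝ → ℝ} (hf : MemLp f 2) (η : ContDiffBump (0 : ℝ)) (b R : ℝ) (m : ℤ) :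
    MemLp (lostWave η b R m f) 2 (stripMeasure R) := by
  have hweight : Continuous fun p ↦ ((√(1 - squareCutoff η R p ^ 2) : ℝ) : ℂ) := by
    have := (contDiff_squareCutoff η R).continuous
    fun_prop
  refine (memLp_landauWave hf b R m).of_le
    (hweight.aestronglyMeasurable.mul (memLp_landauWave hf b R m).1) (ae_of_all _ fun p ↦ ?_)
  have hle : √(1 - squareCutoff η R p ^ 2) ≤ 1 :=
    Real.sqrt_le_one.2 (by linarith [sq_nonneg (squareCutoff η R p)])
  rw [lostWave, norm_mul, Complex.norm_of_nonneg (Real.sqrt_nonneg _)]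
  exact mul_le_of_le_one_left (norm_nonneg _) hle

theorem sq_norm_sqrt_one_sub_squareCutoff_sq_mul (η : ContDiffBump (0 : ℝ)) (R : ℝ) (p : ℝ × ℝ)
    (z : ℂ) :
    ‖√(1 - squareCutoff η R p ^ 2) * z‖ ^ 2 = (1 - squareCutoff η R p ^ 2) * ‖z‖ ^ 2 := by
  rw [norm_mul, Complex.norm_real, Real.norm_eq_abs, mul_pow, sq_abs,
    Real.sq_sqrt (one_sub_squareCutoff_sq_nonneg η R p)]

theorem sq_norm_sum_lostWave {s : Finset ℤ} {K : ℕ} (f : ℕ → ℝ → ℝ) (c : s × Fin K → ℂ)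
    (p : ℝ × ℝ) :
    ‖∑ i, c i * lostWave η b R i.1 (f i.2) p‖ ^ 2 =
      (1 - squareCutoff η R p ^ 2) * ‖landauSum b R f c p‖ ^ 2 := by
  rw [← sq_norm_sqrt_one_sub_squareCutoff_sq_mul, landauSum, Finset.mul_sum]
  simp only [lostWave, mul_left_comm]

theorem integral_sq_norm_lostWave_oscillatorFun_le (hb : 0 < b) (hη : η.rIn < 1 / 2) (hR : 0 < R)
    (hd : 0 < d) {m : ℤ} (hm : |waveNumber R m / b| + d ≤ η.rIn * R) (n : ℕ) :
    ∫ p, ‖lostWave η b R m (oscillatorFun b n) p‖ ^ 2 ∂(stripMeasure R) ≤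
      1 - 2 * η.rIn + (∫ x, (x * oscillatorFun b n x) ^ 2) / d ^ 2 := by
  have hxf : MemLp (fun x ↦ x * oscillatorFun b n x) 2 := by
    simpa only [one_mul] using memLp_mul_oscillatorFun hb 1 n
  have hnormed : ∫ x, oscillatorFun b n x ^ 2 = 1 := by
    simpa only [← sq, if_true] using integral_oscillatorFun_mul_oscillatorFun hb n n
  simp only [lostWave, sq_norm_sqrt_one_sub_squareCutoff_sq_mul]
  simpa only [hnormed, mul_one] using
    integral_one_sub_squareCutoff_sq_mul_le (memLp_oscillatorFun hb n) hxf hη hR hd hm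

theorem exists_submodule_lost_mass_le {s : Finset ℤ} {K : ℕ} {C ε : ℝ} (hb : 0 < b)
    (hη : η.rIn < 1 / 2) (hR : 0 < R) (hd : 0 < d) (hε : 0 < ε)
    (hs : ∀ m ∈ s, |waveNumber R m / b| + d ≤ η.rIn * R)
    (hC : ∀ n < K, ∫ x, (x * oscillatorFun b n x) ^ 2 ≤ C) :
    ∃ W : Submodule ℂ (EuclideanSpace ℂ (s × Fin K)),
      s.card * K * (1 - (1 - 2 * η.rIn + C / d ^ 2) / ε) ≤ Module.finrank ℂ W ∧
      ∀ c ∈ W, ∫ p, (1 - squareCutoff η R p ^ 2) *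
        ‖landauSum b R (oscillatorFun b) c p‖ ^ 2 ∂(stripMeasure R) ≤ ε * ∑ i, ‖c i‖ ^ 2 := by
  obtain ⟨W, hdim, hW⟩ := exists_submodule_integral_sq_norm_sum_le (𝕜 := ℂ)
    (f := fun i : s × Fin K ↦ lostWave η b R i.1 (oscillatorFun b i.2))
    (fun i ↦ memLp_lostWave (memLp_oscillatorFun hb _) η b R _) hε
  refine ⟨W, hdim.trans' ?_, fun c hc ↦ by simpa only [sq_norm_sum_lostWave] using hW c hc⟩
  have htrace : ∑ i : s × Fin K, ∫ p, ‖lostWave η b R i.1 (oscillatorFun b i.2) p‖ ^ 2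
      ∂(stripMeasure R) ≤ ∑ _i : s × Fin K, (1 - 2 * η.rIn + C / d ^ 2) := by
    gcongr with i
    exact (integral_sq_norm_lostWave_oscillatorFun_le hb hη hR hd (hs i.1 i.1.2) i.2).trans
      (by gcongr; exact hC _ i.2.2)
  have hcard : (Fintype.card (s × Fin K) : ℝ) = s.card * K := by simp
  rw [Finset.sum_const, Finset.card_univ, nsmul_eq_mul, hcard] at htrace
  calc s.card * K * (1 - (1 - 2 * η.rIn + C / d ^ 2) / ε)
      = s.card * K - s.card * K * (1 - 2 * η.rIn + C / d ^ 2) / ε := by ring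
    _ ≤ _ := by
      rw [hcard]
      gcongr

end LostMass

/-! ### Trial functions -/

section Trial

variable {η : ContDiffBump (0 : ℝ)} {b R B : ℝ} {s : Finset ℤ} {K : ℕ}

/-- The trial function with coefficients `c`: a superposition of oscillator eigenfunctions in the
Landau gauge, cut off to the square of side `R` and transformed to the symmetric gauge. -/
def landauTrial (η : ContDiffBump (0 : ℝ)) (b R : ℝ) (s : Finset ℤ) (K : ℕ) :
    EuclideanSpace ℂ (s × Fin K) →ₗ[ℂ] (ℝ × ℝ → ℂ) where
  toFun c p := gaugePhase b p * (squareCutoff η R p * landauSum b R (oscillatorFun b) c p)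
  map_add' c c' := by
    ext p
    simp only [landauSum, PiLp.add_apply, Pi.add_apply, add_mul, Finset.sum_add_distrib, mul_add]
  map_smul' a c := by
    ext p
    simp only [landauSum, PiLp.smul_apply, Pi.smul_apply, smul_eq_mul, mul_assoc, ← Finset.mul_sum,
      RingHom.id_apply, mul_left_comm]

theorem landauTrial_apply (c : EuclideanSpace ℂ (s × Fin K)) :
    landauTrial η b R s K c =
      fun p ↦ gaugePhase b p * (squareCutoff η R p * landauSum b R (oscillatorFun b) c p) :=
  rfl

theorem isTestOn_landauTrial (hη : η.rOut < 1 / 2) (hR : 0 < R)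
    (c : EuclideanSpace ℂ (s × Fin K)) : IsTestOn (rectR R R) (landauTrial η b R s K c) :=
  isTestOn_gaugePhase_mul b <| isTestOn_squareCutoff_mul hη hR <|
    contDiff_landauSum contDiff_oscillatorFun b R c

theorem integral_sq_norm_landauTrial (hb : 0 < b) (hη : η.rOut < 1 / 2) (hR : 0 < R)
    (c : EuclideanSpace ℂ (s × Fin K)) :
    ∫ p, ‖landauTrial η b R s K c p‖ ^ 2 = ∑ i, ‖c i‖ ^ 2 -
      ∫ p, (1 - squareCutoff η R p ^ 2) * ‖landauSum b R (oscillatorFun b) c p‖ ^ 2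
        ∂(stripMeasure R) := by
  set v := landauSum b R (oscillatorFun b) c
  have hv : Integrable (fun p ↦ ‖v p‖ ^ 2) (stripMeasure R) :=
    (memLp_landauSum (memLp_oscillatorFun hb) b R c).integrable_norm_pow two_ne_zero
  have hlost : Integrable (fun p ↦ (1 - squareCutoff η R p ^ 2) * ‖v p‖ ^ 2) (stripMeasure R) := by
    refine hv.mono' ?_ (ae_of_all _ fun p ↦ ?_)
    · have := (contDiff_squareCutoff η R).continuous
      have : Continuous v := (contDiff_landauSum contDiff_oscillatorFun b R c).continuous
      exact Continuous.aestronglyMeasurable (by fun_prop)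
    · rw [Real.norm_of_nonneg (mul_nonneg (one_sub_squareCutoff_sq_nonneg η R p) (by positivity))]
      exact mul_le_of_le_one_left (by positivity) (by linarith [sq_nonneg (squareCutoff η R p)])
  rw [← integral_sq_norm_landauSum_oscillatorFun hb hR, ← integral_sub hv hlost,
    integral_eq_integral_stripMeasure (L := R)]
  · refine integral_congr_ae (ae_of_all _ fun p ↦ ?_)
    simp only [landauTrial_apply, norm_mul, norm_gaugePhase, one_mul, Complex.norm_real, mul_pow,
      Real.norm_eq_abs, sq_abs]
    ring
  · intro p hp
    have hnot : p ∉ tsupport (landauTrial η b R s K c) := fun h ↦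
      hp (Set.Ioo_subset_Ioc_self ((isTestOn_landauTrial hη hR c).2.2 h).2)
    simp [image_eq_zero_of_notMem_tsupport hnot]

theorem qb_landauTrial_le (hb : 0 < b) (hη : η.rOut < 1 / 2) (hB : ∀ t, |deriv η t| ≤ B)
    (hR : 0 < R) {ε : ℝ} (hε : 0 < ε) (c : EuclideanSpace ℂ (s × Fin K)) :
    qb b (landauTrial η b R s K c) ≤
      ((1 + ε) * ((2 * K - 1) * b) + (1 + ε⁻¹) * (2 * (B / R) ^ 2)) * ∑ i, ‖c i‖ ^ 2 := by
  have hv := contDiff_landauSum (contDiff_oscillatorFun (b := b)) b R c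
  have hcut := isTestOn_squareCutoff_mul hη hR hv
  have hX : MemLp (dX (landauSum b R (oscillatorFun b) c)) 2 (stripMeasure R) := by
    rw [dX_landauSum contDiff_oscillatorFun]
    exact memLp_landauSum (memLp_deriv_oscillatorFun hb) b R c
  have hP : MemLp (landauMomentum b (landauSum b R (oscillatorFun b) c)) 2 (stripMeasure R) := by
    rw [landauMomentum_landauSum hb.ne' contDiff_oscillatorFun]
    exact memLp_landauSum (memLp_mul_oscillatorFun hb b) b R c
  have hlevel (i : s × Fin K) : 2 * ((i.2 : ℕ) : ℝ) + 1 ≤ 2 * K - 1 := by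
    have : ((i.2 : ℕ) : ℝ) + 1 ≤ K := mod_cast i.2.2
    linarith
  calc qb b (landauTrial η b R s K c)
      ≤ (1 + ε) * (∑ i, ((2 * (i.2 : ℕ) + 1) * b) * ‖c i‖ ^ 2) +
          (1 + ε⁻¹) * (2 * (B / R) ^ 2) * ∑ i, ‖c i‖ ^ 2 := by
        rw [landauTrial_apply, qb_gaugePhase_mul b (hcut.1.differentiable (by simp)),
          ← integral_energy_landauSum_oscillatorFun hb hR,
          ← integral_sq_norm_landauSum_oscillatorFun hb hR]
        exact landauEnergy_squareCutoff_mul_le b hη hB hR hε hv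
          (memLp_landauSum (memLp_oscillatorFun hb) b R c) hX hP
    _ ≤ (1 + ε) * (∑ i, ((2 * K - 1) * b) * ‖c i‖ ^ 2) +
          (1 + ε⁻¹) * (2 * (B / R) ^ 2) * ∑ i, ‖c i‖ ^ 2 := by
        gcongr with i
        exact hlevel i
    _ = _ := by
        rw [← Finset.mul_sum]
        ring

theorem exists_submodule_qb_lt {lam d C ε : ℝ} (hb : 0 < b) (hlam : 0 ≤ lam)
    (hη : η.rOut < 1 / 2) (hB : ∀ t, |deriv η t| ≤ B) (hR : 0 < R) (hd : 0 < d) (hε : 0 < ε)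
    (hs : ∀ m ∈ s, |waveNumber R m / b| + d ≤ η.rIn * R)
    (hC : ∀ n < K, ∫ x, (x * oscillatorFun b n x) ^ 2 ≤ C)
    (hlt : (1 + ε) * ((2 * K - 1) * b) + (1 + ε⁻¹) * (2 * (B / R) ^ 2) < lam * (1 - ε)) :
    ∃ V : Submodule ℂ (ℝ × ℝ → ℂ), (V : Set (ℝ × ℝ → ℂ)) ⊆ {u | IsTestOn (rectR R R) u} ∧
      (∀ u ∈ V, u ≠ 0 → qb b u < lam * ∫ p, ‖u p‖ ^ 2) ∧
      s.card * K * (1 - (1 - 2 * η.rIn + C / d ^ 2) / ε) ≤ Module.finrank ℂ V := by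
  obtain ⟨W, hdim, hW⟩ := exists_submodule_lost_mass_le hb (η.rIn_lt_rOut.trans hη) hR hd hε hs hC
  have hqb {c} (hc : c ∈ W) (hc₀ : c ≠ 0) : qb b (landauTrial η b R s K c) <
      lam * ∫ p, ‖landauTrial η b R s K c p‖ ^ 2 := by
    have hpos : 0 < ∑ i, ‖c i‖ ^ 2 := by
      rw [← EuclideanSpace.norm_sq_eq]
      positivity
    calc qb b (landauTrial η b R s K c)
        ≤ _ := qb_landauTrial_le hb hη hB hR hε c
      _ < lam * (1 - ε) * ∑ i, ‖c i‖ ^ 2 := by gcongr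
      _ = lam * (∑ i, ‖c i‖ ^ 2 - ε * ∑ i, ‖c i‖ ^ 2) := by ring
      _ ≤ lam * ∫ p, ‖landauTrial η b R s K c p‖ ^ 2 := by
          rw [integral_sq_norm_landauTrial hb hη hR]
          gcongr
          exact hW c hc
  have hinj : Function.Injective ((landauTrial η b R s K).domRestrict W) := by
    refine (injective_iff_map_eq_zero _).2 fun c hc ↦ ?_
    by_contra hc₀
    have h := hqb c.2 (by simpa using hc₀)
    rw [LinearMap.domRestrict_apply] at hc
    simp [hc, qb, dX, dY] at h
  refine ⟨W.map (landauTrial η b R s K), ?_, ?_, ?_⟩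
  · rintro _ ⟨c, -, rfl⟩
    exact isTestOn_landauTrial hη hR c
  · rintro _ ⟨c, hc, rfl⟩ hne
    exact hqb hc fun h ↦ hne (by rw [h, map_zero])
  · rwa [← LinearMap.range_domRestrict, LinearMap.finrank_range_of_inj hinj]

end Trial

/-! ### Counting -/

section Counting

open Topology

variable {b lam L κ : ℝ} {K : ℕ}

/-- The Fourier modes of period `L` whose wave number is at most `κ` in absolute value. -/
def modesBelow (L κ : ℝ) : Finset ℤ := Finset.Icc (-⌊L * κ / (2 * π)⌋₊) ⌊L * κ / (2 * π)⌋₊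

theorem mem_modesBelow (hL : 0 < L) (hκ : 0 ≤ κ) {m : ℤ} :
    m ∈ modesBelow L κ ↔ |waveNumber L m| ≤ κ := by
  have hfloor : m.natAbs ≤ ⌊L * κ / (2 * π)⌋₊ ↔ |waveNumber L m| ≤ κ := by
    rw [Nat.le_floor_iff (by positivity), Nat.cast_natAbs, Int.cast_abs, waveNumber, abs_div,
      abs_mul, abs_of_pos two_pi_pos, abs_of_pos hL, le_div_iff₀ two_pi_pos, div_le_iff₀ hL,
      mul_comm κ, mul_comm (2 * π)]
  rw [← hfloor, modesBelow, Finset.mem_Icc]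
  lia

theorem card_modesBelow (L κ : ℝ) : (modesBelow L κ).card = 2 * ⌊L * κ / (2 * π)⌋₊ + 1 := by
  rw [modesBelow, Int.card_Icc]
  lia

theorem tendsto_const_div_pow_atTop (a : ℝ) {n : ℕ} (hn : n ≠ 0) :
    Tendsto (fun R : ℝ ↦ a / R ^ n) atTop (𝓝 0) :=
  tendsto_const_nhds.div_atTop (tendsto_pow_atTop hn)

theorem tendsto_card_modesBelow_div_sq (hκ : 0 ≤ κ) {μ : ℝ} (hμ : 0 ≤ μ) :
    Tendsto (fun R : ℝ ↦ ((modesBelow R (κ * R + μ)).card : ℝ) / R ^ 2) atTop (𝓝 (κ / π)) := by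
  have hmain : Tendsto (fun R : ℝ ↦ κ / π + μ / π / R ^ 1) atTop (𝓝 (κ / π)) := by
    simpa using (tendsto_const_div_pow_atTop (μ / π) one_ne_zero).const_add (κ / π)
  have herror := tendsto_const_div_pow_atTop 1 two_ne_zero
  have hlower := hmain.sub herror
  have hupper := hmain.add herror
  rw [sub_zero] at hlower
  rw [add_zero] at hupper
  refine tendsto_of_tendsto_of_tendsto_of_le_of_le' hlower hupper ?_ ?_ <;>
  filter_upwards [eventually_gt_atTop 0] with R hR
  · have hfloor := Nat.lt_floor_add_one (R * (κ * R + μ) / (2 * π))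
    rw [le_div_iff₀ (by positivity), card_modesBelow]
    calc (κ / π + μ / π / R ^ 1 - 1 / R ^ 2) * R ^ 2
        = 2 * (R * (κ * R + μ) / (2 * π)) - 1 := by field_simp
      _ ≤ _ := by
        push_cast
        linarith
  · have hfloor : (⌊R * (κ * R + μ) / (2 * π)⌋₊ : ℝ) ≤ R * (κ * R + μ) / (2 * π) :=
      Nat.floor_le (by positivity)
    rw [div_le_iff₀ (by positivity), card_modesBelow]
    calc ((2 * ⌊R * (κ * R + μ) / (2 * π)⌋₊ + 1 : ℕ) : ℝ)
        ≤ 2 * (R * (κ * R + μ) / (2 * π)) + 1 := by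
          push_cast
          linarith
      _ = _ := by field_simp

theorem finrank_le_card_modesBelow_mul {R₁ R₂ : ℝ} (hb : 0 < b) (hR₁ : 0 ≤ R₁) (hR₂ : 0 < R₂)
    (hK : lam ≤ (2 * K + 1) * b) {V : Submodule ℂ (ℝ × ℝ → ℂ)}
    (hV : (V : Set (ℝ × ℝ → ℂ)) ⊆ {u | IsTestOn (rectR R₁ R₂) u})
    (hlt : ∀ u ∈ V, u ≠ 0 → qb b u < lam * ∫ p, ‖u p‖ ^ 2) :
    Module.finrank ℂ V ≤ (modesBelow R₂ (b / 2 * R₁ + √lam)).card * K := by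
  refine finrank_le_card_mul hb hR₂ hK (fun m hm ↦ ?_) hV hlt
  rw [mem_modesBelow hR₂ (by positivity), not_le] at hm
  linarith

theorem NNb_le_card_modesBelow_mul {R₁ R₂ : ℝ} (hb : 0 < b) (hR₁ : 0 ≤ R₁) (hR₂ : 0 < R₂)
    (hK : lam ≤ (2 * K + 1) * b) :
    NNb b lam (rectR R₁ R₂) ≤ (modesBelow R₂ (b / 2 * R₁ + √lam)).card * K := by
  refine csSup_le' ?_
  rintro _ ⟨V, hV, rfl, hlt⟩
  exact finrank_le_card_modesBelow_mul hb hR₁ hR₂ hK hV hlt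

theorem lt_landauCount_iff (hb : 0 < b) {n : ℕ} :
    n < landauCount b lam ↔ (2 * n + 1) * b < lam := by
  have hlevel (n : ℕ) : (2 * (n : ℝ) + 1) * b < lam ↔ n < ⌈(lam / b - 1) / 2⌉₊ := by
    rw [Nat.lt_ceil, ← lt_div_iff₀ hb]
    constructor <;> intro h <;> linarith
  have hset : {n : ℕ | (2 * (n : ℝ) + 1) * b < lam} = Set.Iio ⌈(lam / b - 1) / 2⌉₊ :=
    Set.ext hlevel
  rw [hlevel, landauCount, hset]
  simp

theorem le_two_mul_landauCount_add_one_mul (hb : 0 < b) (lam : ℝ) :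
    lam ≤ (2 * landauCount b lam + 1) * b :=
  not_lt.1 fun h ↦ lt_irrefl _ ((lt_landauCount_iff hb).2 h)

theorem two_mul_landauCount_sub_one_mul_lt (hb : 0 < b) (hlam : 0 < lam) :
    (2 * landauCount b lam - 1) * b < lam := by
  rcases hK : landauCount b lam with _ | k
  · push_cast
    linarith
  · have hk : (2 * (k : ℝ) + 1) * b < lam := (lt_landauCount_iff hb).1 (by lia)
    push_cast
    linarith

theorem finrank_le_NNb {R₁ R₂ : ℝ} (hb : 0 < b) (hR₁ : 0 ≤ R₁) (hR₂ : 0 < R₂)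
    {V : Submodule ℂ (ℝ × ℝ → ℂ)} (hV : (V : Set (ℝ × ℝ → ℂ)) ⊆ {u | IsTestOn (rectR R₁ R₂) u})
    (hlt : ∀ u ∈ V, u ≠ 0 → qb b u < lam * ∫ p, ‖u p‖ ^ 2) :
    Module.finrank ℂ V ≤ NNb b lam (rectR R₁ R₂) := by
  refine le_csSup
    ⟨(modesBelow R₂ (b / 2 * R₁ + √lam)).card * landauCount b lam, ?_⟩ ⟨V, hV, rfl, hlt⟩
  rintro _ ⟨V', hV', rfl, hlt'⟩
  exact finrank_le_card_modesBelow_mul hb hR₁ hR₂ (le_two_mul_landauCount_add_one_mul hb lam)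
    hV' hlt'

theorem eventually_NNb_div_sq_lt (hb : 0 < b) (hK : lam ≤ (2 * K + 1) * b) {a : ℝ}
    (ha : b / (2 * π) * K < a) :
    ∀ᶠ R : ℝ in atTop, (NNb b lam (rectR R R) : ℝ) / R ^ 2 < a := by
  have hlim := (tendsto_card_modesBelow_div_sq (half_pos hb).le (sqrt_nonneg lam)).mul_const (K : ℝ)
  rw [div_div] at hlim
  filter_upwards [hlim.eventually_lt_const ha, eventually_gt_atTop 0] with R hRa hR
  refine lt_of_le_of_lt ?_ hRa
  rw [div_mul_eq_mul_div]
  gcongr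
  exact_mod_cast NNb_le_card_modesBelow_mul hb hR.le hR hK

theorem card_modesBelow_mul_le_NNb {η : ContDiffBump (0 : ℝ)} {R B C d ε : ℝ} (hb : 0 < b)
    (hlam : 0 ≤ lam) (hη : η.rOut < 1 / 2) (hB : ∀ t, |deriv η t| ≤ B) (hR : 0 < R) (hd : 0 < d)
    (hdR : d ≤ η.rIn * R) (hε : 0 < ε) (hC : ∀ n < K, ∫ x, (x * oscillatorFun b n x) ^ 2 ≤ C)
    (hlt : (1 + ε) * ((2 * K - 1) * b) + (1 + ε⁻¹) * (2 * (B / R) ^ 2) < lam * (1 - ε)) :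
    (modesBelow R (b * (η.rIn * R - d))).card * K * (1 - (1 - 2 * η.rIn + C / d ^ 2) / ε) ≤
      NNb b lam (rectR R R) := by
  have hmodes : ∀ m ∈ modesBelow R (b * (η.rIn * R - d)),
      |waveNumber R m / b| + d ≤ η.rIn * R := by
    intro m hm
    rw [mem_modesBelow hR (mul_nonneg hb.le (sub_nonneg.2 hdR))] at hm
    rw [abs_div, abs_of_pos hb, ← le_sub_iff_add_le, div_le_iff₀' hb]
    exact hm
  obtain ⟨V, hV, hqb, hdim⟩ := exists_submodule_qb_lt hb hlam hη hB hR hd hε hmodes hC hlt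
  exact hdim.trans (mod_cast finrank_le_NNb hb hR.le hR hV hqb)

theorem eventually_lt_NNb_div_sq_of_bump {η : ContDiffBump (0 : ℝ)} {δ ε a : ℝ} (hb : 0 < b)
    (hlam : 0 ≤ lam) (hη : η.rOut < 1 / 2) (hδ : 0 < δ) (hδη : δ ≤ η.rIn) (hε : 0 < ε)
    (hlt : (1 + ε) * ((2 * K - 1) * b) < lam * (1 - ε))
    (ha : a < b * (η.rIn - δ) / π * K * (1 - (1 - 2 * η.rIn) / ε)) :
    ∀ᶠ R : ℝ in atTop, a < (NNb b lam (rectR R R) : ℝ) / R ^ 2 := by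
  obtain ⟨B, hB⟩ := η.hasCompactSupport.deriv.exists_bound_of_continuous
    (η.contDiff.continuous_deriv (n := 1) le_rfl)
  set C := ∑ n ∈ Finset.range K, ∫ x, (x * oscillatorFun b n x) ^ 2
  have hC : ∀ n < K, ∫ x, (x * oscillatorFun b n x) ^ 2 ≤ C := fun n hn ↦
    Finset.single_le_sum (f := fun n ↦ ∫ x, (x * oscillatorFun b n x) ^ 2)
      (fun _ _ ↦ integral_nonneg fun _ ↦ sq_nonneg _) (Finset.mem_range.2 hn)
  have henergy : Tendsto (fun R : ℝ ↦ (1 + ε) * ((2 * K - 1) * b) +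
      (1 + ε⁻¹) * (2 * (B / R ^ 1) ^ 2)) atTop (𝓝 ((1 + ε) * ((2 * K - 1) * b))) := by
    simpa using ((((tendsto_const_div_pow_atTop B one_ne_zero).pow 2).const_mul 2).const_mul
      (1 + ε⁻¹)).const_add ((1 + ε) * ((2 * K - 1) * b))
  have hdensity : Tendsto (fun R : ℝ ↦ ((modesBelow R (b * (η.rIn - δ) * R + 0)).card : ℝ) / R ^ 2 *
      K * (1 - (1 - 2 * η.rIn + C / δ ^ 2 / R ^ 2) / ε)) atTop
      (𝓝 (b * (η.rIn - δ) / π * K * (1 - (1 - 2 * η.rIn) / ε))) := by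
    have htail := (tendsto_const_div_pow_atTop (C / δ ^ 2) two_ne_zero).const_add (1 - 2 * η.rIn)
    rw [add_zero] at htail
    exact ((tendsto_card_modesBelow_div_sq (mul_nonneg hb.le (sub_nonneg.2 hδη)) le_rfl).mul_const
      (K : ℝ)).mul ((htail.div_const ε).const_sub 1)
  filter_upwards [henergy.eventually_lt_const hlt, hdensity.eventually_const_lt ha,
    eventually_gt_atTop 0] with R hRlt hRa hR
  refine hRa.trans_le ?_
  rw [le_div_iff₀ (by positivity)]
  rw [pow_one] at hRlt
  have hNNb := card_modesBelow_mul_le_NNb hb hlam hη hB hR (mul_pos hδ hR) (by gcongr) hε hC hRlt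
  rw [← sub_mul, ← mul_assoc] at hNNb
  refine hNNb.trans' (le_of_eq ?_)
  rw [add_zero]
  field_simp

theorem eventually_lt_NNb_div_sq (hb : 0 < b) (hlam : 0 ≤ lam) (hK : (2 * K - 1) * b < lam) {a : ℝ}
    (ha : a < b / (2 * π) * K) :
    ∀ᶠ R : ℝ in atTop, a < (NNb b lam (rectR R R) : ℝ) / R ^ 2 := by
  obtain ⟨ε, hlt, hε⟩ : ∃ ε, (1 + ε) * ((2 * K - 1) * b) < lam * (1 - ε) ∧ 0 < ε := by
    have hcont : ∀ᶠ ε : ℝ in 𝓝 0, (1 + ε) * ((2 * K - 1) * b) < lam * (1 - ε) :=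
      ContinuousAt.eventually_lt (by fun_prop) (by fun_prop) (by simpa using hK)
    exact ((hcont.filter_mono nhdsWithin_le_nhds).and self_mem_nhdsWithin).exists (f := 𝓝[>] 0)
  obtain ⟨r, ⟨har, hr⟩, hr' : r < 1 / 2⟩ : ∃ r, (a < b * (r - (1 / 2 - r)) / π * K *
      (1 - (1 - 2 * r) / ε) ∧ 1 / 4 < r) ∧ r < 1 / 2 := by
    have hcont : ∀ᶠ r : ℝ in 𝓝 (1 / 2),
        a < b * (r - (1 / 2 - r)) / π * K * (1 - (1 - 2 * r) / ε) := by
      refine ContinuousAt.eventually_lt (by fun_prop) (by fun_prop) (ha.trans_eq ?_)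
      ring
    exact (((hcont.and (eventually_gt_nhds (by norm_num))).filter_mono nhdsWithin_le_nhds).and
      self_mem_nhdsWithin).exists (f := 𝓝[<] (1 / 2))
  let η : ContDiffBump (0 : ℝ) := ⟨r, (r + 1 / 2) / 2, by linarith, by linarith⟩
  exact eventually_lt_NNb_div_sq_of_bump (η := η) (δ := 1 / 2 - r) hb hlam
    (show (r + 1 / 2) / 2 < 1 / 2 by linarith) (by linarith) (show 1 / 2 - r ≤ r by linarith) hε
    hlt har

end Counting

/-- Colin de Verdière's formula for the density of states of the
constant-field Landau Hamiltonian on ℝ². -/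
theorem landau_density_of_states (b lam : ℝ) (hb : 0 < b) (hlam : 0 < lam) :
    Tendsto (fun R : ℝ => (NNb b lam (rectR R R) : ℝ) / R ^ 2) atTop
      (nhds ((b / (2 * π)) * (landauCount b lam : ℝ))) := by
  rw [tendsto_order]
  refine ⟨fun a ha ↦ ?_, fun a ha ↦ ?_⟩
  · exact eventually_lt_NNb_div_sq hb hlam.le (two_mul_landauCount_sub_one_mul_lt hb hlam) ha
  · exact eventually_NNb_div_sq_lt hb (le_two_mul_landauCount_add_one_mul hb lam) ha
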